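/- Let f be a self-diffeomorphism of the solid torus M = D² × S¹ with f = id on ∂M. Then there exists r₀ ∈ (0,1) and an ambient isotopy G of M rel ∂M such that for all z₁ ∈ ∂D², z₂ ∈ S¹, and r ∈ [0, r₀]: (G₁ ∘ f)((1−r)z₁, z₂) = ((1−r)z₁, e^{ir}·z₂), where D² and S¹ are regarded as subsets of ℂ. -/

import Mathlib

open Set Metric

/-- A bi-Lipschitz smooth bijection of a half-space like set has smooth inverse. -/
theorem smooth_inverse {V : Type*} [NormedAddCommGroup V] [NormedSpace ℝ V]
    [FiniteDimensional ℝ V] {S : Set V} (hS : UniqueDiffOn ℝ S)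
    (hv : ∀ x ∈ S, ∀ v : V, (∀ τ : ℝ, 0 ≤ τ → x + τ • v ∈ S) ∨ (∀ τ : ℝ, 0 ≤ τ → x + τ • (-v) ∈ S))
    {k g : V → V} (hk : ContDiffOn ℝ (⊤ : ℕ∞) k S)
    (hg : MapsTo g S S) (hkg : ∀ x ∈ S, k (g x) = x) {L : ℝ}
    (hL : ∀ x ∈ S, ∀ y ∈ S, ‖x - y‖ ≤ L * ‖k x - k y‖) :
    ContDiffOn ℝ (⊤ : ℕ∞) g S := by
  have : CompleteSpace V := FiniteDimensional.complete ℝ V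
  have hd : ∀ x ∈ S, HasFDerivWithinAt k (fderivWithin ℝ k S x) S x := fun x hx =>
    ((hk x hx).differentiableWithinAt (by simp)).hasFDerivWithinAt
  have key : ∀ x ∈ S, ∀ v : V, (∀ τ : ℝ, 0 ≤ τ → x + τ • v ∈ S) →
      ‖v‖ ≤ L * ‖fderivWithin ℝ k S x v‖ := by
    intro x hx v hτ
    have h1 : HasDerivWithinAt (fun τ : ℝ => x + τ • v) v (Ioi 0) 0 := by
      simpa using ((hasDerivWithinAt_id (0:ℝ) (Ioi 0)).smul_const v).const_add x
    have h2 : HasDerivWithinAt (fun τ : ℝ => k (x + τ • v)) (fderivWithin ℝ k S x v) (Ioi 0) 0 := by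
      have h0 : HasFDerivWithinAt k (fderivWithin ℝ k S x) S (x + (0:ℝ) • v) := by
        simpa using hd x hx
      exact h0.comp_hasDerivWithinAt (0:ℝ) h1 (fun τ hpt1 => hτ τ (le_of_lt hpt1))
    rw [hasDerivWithinAt_iff_tendsto_slope' self_notMem_Ioi] at h2
    refine ge_of_tendsto (h2.norm.const_mul L) ?_
    filter_upwards [self_mem_nhdsWithin] with τ hpt1
    have hpt2 : 0 < τ := hpt1
    have h3 := hL _ (hτ τ hpt2.le) x hx
    simp only [add_sub_cancel_left, norm_smul, Real.norm_eq_abs, abs_of_pos hpt2] at h3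
    simp only [slope, zero_smul, add_zero, sub_zero, vsub_eq_sub, norm_smul, norm_inv,
      Real.norm_eq_abs, abs_of_pos hpt2]
    calc ‖v‖ = τ⁻¹ * (τ * ‖v‖) := by field_simp
      _ ≤ τ⁻¹ * (L * ‖k (x + τ • v) - k x‖) := by gcongr
      _ = _ := by ring
  have inj : ∀ x ∈ S, Function.Injective (fderivWithin ℝ k S x).toLinearMap := by
    intro x hx
    rw [injective_iff_map_eq_zero]
    intro v h0
    have h0' : fderivWithin ℝ k S x v = 0 := h0
    rcases hv x hx v with h | h
    · have := key x hx v h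
      rw [h0'] at this
      simpa using this
    · have := key x hx (-v) h
      rw [map_neg, h0'] at this
      simpa using this
  have hequiv : ∀ x ∈ S, ∃ e : V ≃L[ℝ] V, (e : V →L[ℝ] V) = fderivWithin ℝ k S x := by
    intro x hx
    refine ⟨(LinearEquiv.ofInjectiveEndo _ (inj x hx)).toContinuousLinearEquiv, ?_⟩
    ext v
    rfl
  have hgc : ContinuousOn g S := by
    have : ∀ x ∈ S, ∀ y ∈ S, dist (g x) (g y) ≤ (L.toNNReal) * dist x y := by
      intro x hx y hy
      have := hL _ (hg hx) _ (hg hy)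
      rw [hkg x hx, hkg y hy] at this
      rw [dist_eq_norm, dist_eq_norm]
      refine this.trans ?_
      gcongr
      exact Real.le_coe_toNNReal L
    exact (LipschitzOnWith.of_dist_le_mul this).continuousOn
  have hgd : ∀ y ∈ S, HasFDerivWithinAt g
      (ContinuousLinearMap.inverse (fderivWithin ℝ k S (g y))) S y := by
    intro y hy
    obtain ⟨e, he⟩ := hequiv (g y) (hg hy)
    rw [← he, ContinuousLinearMap.inverse_equiv]
    refine HasFDerivWithinAt.of_local_left_inverse (f := k) (t := S) ?_ (he ▸ hd _ (hg hy)) hy ?_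
    · exact (hgc y hy).tendsto_nhdsWithin hg
    · filter_upwards [self_mem_nhdsWithin] with x hx using hkg x hx
  have main : ∀ n : ℕ, ContDiffOn ℝ n g S := by
    intro n
    induction n with
    | zero => simpa using hgc
    | succ n ih =>
      push_cast
      rw [contDiffOn_succ_iff_hasFDerivWithinAt_of_uniqueDiffOn hS]
      refine ⟨by simp, _, ?_, hgd⟩
      intro y hy
      obtain ⟨e, he⟩ := hequiv (g y) (hg hy)
      have h1 : ContDiffOn ℝ n (fderivWithin ℝ k S) S :=
        hk.fderivWithin hS (by exact_mod_cast le_top)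
      have h2 : ContDiffWithinAt ℝ n (fun y => fderivWithin ℝ k S (g y)) S y :=
        (h1.comp ih hg) y hy
      have h3 : ContDiffAt ℝ n ContinuousLinearMap.inverse (fderivWithin ℝ k S (g y)) := by
        rw [← he]
        exact contDiffAt_map_inverse e
      exact h3.comp_contDiffWithinAt y h2
  exact contDiffOn_infty.2 main

/-- Bijectivity and bi-Lipschitz estimate for block-triangular-like perturbations. -/
theorem block_antilip {A : Type*} [NormedAddCommGroup A]
    {q : ℝ × A → ℝ × A} {c C η : ℝ} (hc : 0 < c) (hC : 0 ≤ C) (hη : 0 ≤ η)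
    (hsmall : η + C * (η / c) ≤ 1 / 2)
    (h1 : ∀ a s s', 0 ≤ s' → s' ≤ s → -(1 - c) * (s - s') ≤ (q (s, a)).1 - (q (s', a)).1)
    (h2 : ∀ s a a', 0 ≤ s → ‖q (s, a) - q (s, a')‖ ≤ η * ‖a - a'‖)
    (h3 : ∀ a s s', 0 ≤ s' → s' ≤ s → ‖q (s, a) - q (s', a)‖ ≤ C * (s - s'))
    (x y : ℝ × A) (hx : 0 ≤ x.1) (hy : 0 ≤ y.1) :
    ‖x - y‖ ≤ (2 * (1 + C / c) + (1 + η * (2 * (1 + C / c))) / c) * ‖(x + q x) - (y + q y)‖ := by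
  wlog hxy : y.1 ≤ x.1 generalizing x y
  · rw [norm_sub_rev x y, norm_sub_rev (x + q x)]
    exact this y x hy hx (le_of_not_ge hxy)
  obtain ⟨s, a⟩ := x
  obtain ⟨s', a'⟩ := y
  simp only at hx hy hxy
  set D := ‖((s, a) + q (s, a)) - ((s', a') + q (s', a'))‖ with hD
  have e1 := h1 a s s' hy hxy
  have e2 := h2 s' a a' hy
  have e3 := h3 a s s' hy hxy
  have n1 : ‖((s, a) + q (s, a)).1 - ((s', a') + q (s', a')).1‖ ≤ D := norm_fst_le
    (((s, a) + q (s, a)) - ((s', a') + q (s', a')))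
  have n2 : ‖((s, a) + q (s, a)).2 - ((s', a') + q (s', a')).2‖ ≤ D := norm_snd_le
    (((s, a) + q (s, a)) - ((s', a') + q (s', a')))
  have e21 : ‖(q (s', a)).1 - (q (s', a')).1‖ ≤ _ := (norm_fst_le (q (s', a) - q (s', a'))).trans e2
  have e22 : ‖(q (s', a)).2 - (q (s', a')).2‖ ≤ _ := (norm_snd_le (q (s', a) - q (s', a'))).trans e2
  have e32 : ‖(q (s, a)).2 - (q (s', a)).2‖ ≤ _ := (norm_snd_le (q (s, a) - q (s', a))).trans e3
  simp only [Prod.fst_add, Prod.snd_add] at n1 n2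
  rw [Real.norm_eq_abs, abs_le] at n1 e21
  have b1 : c * (s - s') ≤ D + η * ‖a - a'‖ := by nlinarith [n1.2, e21.1]
  have b2 : ‖a - a'‖ ≤ D + C * (s - s') + η * ‖a - a'‖ := by
    have : a - a' = (a + (q (s, a)).2 - (a' + (q (s', a')).2)) - ((q (s, a)).2 - (q (s', a)).2)
        - ((q (s', a)).2 - (q (s', a')).2) := by abel
    calc ‖a - a'‖ = _ := congrArg norm this
      _ ≤ _ := norm_sub_le _ _
      _ ≤ _ := add_le_add (norm_sub_le _ _) le_rfl
      _ ≤ D + C * (s - s') + η * ‖a - a'‖ := by gcongr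
  have b3 : s - s' ≤ (D + η * ‖a - a'‖) / c := by
    rw [le_div_iff₀ hc]; linarith
  have hD0 : 0 ≤ D := norm_nonneg _
  have b4 : ‖a - a'‖ ≤ 2 * (1 + C / c) * D := by
    have : C * (s - s') ≤ C * ((D + η * ‖a - a'‖) / c) := by gcongr
    have e : C * ((D + η * ‖a - a'‖) / c) = C / c * D + C * (η / c) * ‖a - a'‖ := by ring
    nlinarith [norm_nonneg (a - a')]
  have b5 : s - s' ≤ (1 + η * (2 * (1 + C / c))) / c * D := by
    refine b3.trans ?_
    rw [div_mul_eq_mul_div]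
    gcongr
    nlinarith
  have p1 : 0 ≤ 2 * (1 + C / c) * D := by positivity
  have p2 : 0 ≤ (1 + η * (2 * (1 + C / c))) / c * D := by positivity
  rw [Prod.norm_def]
  simp only [Prod.fst_sub, Prod.snd_sub, Real.norm_eq_abs, abs_of_nonneg (sub_nonneg.2 hxy)]
  refine max_le ?_ ?_ <;> linarith

theorem block_surj {A : Type*} [NormedAddCommGroup A] [CompleteSpace A]
    {q : ℝ × A → ℝ × A} {c C η : ℝ} (hc : 0 < c) (hC : 0 ≤ C) (hη : 0 ≤ η)
    (hsmall : η + C * (η / c) ≤ 1 / 2)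
    (h0 : ∀ a, q (0, a) = 0)
    (h1 : ∀ a s s', 0 ≤ s' → s' ≤ s → -(1 - c) * (s - s') ≤ (q (s, a)).1 - (q (s', a)).1)
    (h2 : ∀ s a a', 0 ≤ s → ‖q (s, a) - q (s, a')‖ ≤ η * ‖a - a'‖)
    (h3 : ∀ a s s', 0 ≤ s' → s' ≤ s → ‖q (s, a) - q (s', a)‖ ≤ C * (s - s'))
    (y : ℝ × A) (hy : 0 ≤ y.1) : ∃ x : ℝ × A, 0 ≤ x.1 ∧ x + q x = y := by
  obtain ⟨σ, α⟩ := y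
  simp only at hy
  have h3' : ∀ a s s', 0 ≤ s' → 0 ≤ s → ‖q (s, a) - q (s', a)‖ ≤ C * |s - s'| := by
    intro a s s' hs' hs
    rcases le_total s' s with h | h
    · rw [abs_of_nonneg (sub_nonneg.2 h)]; exact h3 a s s' hs' h
    · rw [norm_sub_rev, abs_sub_comm, abs_of_nonneg (sub_nonneg.2 h)]; exact h3 a s' s hs h
  have ex : ∀ a, ∃ s, 0 ≤ s ∧ s + (q (s, a)).1 = σ := by
    intro a
    have hcont : ContinuousOn (fun s => s + (q (s, a)).1) (Ici 0) := by
      refine continuousOn_id.add ?_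
      have : LipschitzOnWith C.toNNReal (fun s => (q (s, a)).1) (Ici 0) := by
        refine LipschitzOnWith.of_dist_le_mul fun s hs s' hs' => ?_
        rw [Real.coe_toNNReal _ hC, Real.dist_eq, Real.dist_eq]
        exact (norm_fst_le (q (s, a) - q (s', a))).trans (h3' a s s' hs' hs)
      exact this.continuousOn
    have hle : (0:ℝ) ≤ σ / c := by positivity
    have hivt := intermediate_value_Icc hle (hcont.mono Icc_subset_Ici_self)
    have : σ ∈ Icc (0 + (q (0, a)).1) (σ / c + (q (σ / c, a)).1) := by
      refine ⟨by simpa [h0 a] using hy, ?_⟩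
      have := h1 a (σ / c) 0 le_rfl hle
      rw [h0 a] at this
      simp only [Prod.fst_zero, sub_zero] at this
      have e : σ / c - (1 - c) * (σ / c) = σ := by field_simp; ring
      linarith
    obtain ⟨s, hs, hs2⟩ := hivt this
    exact ⟨s, hs.1, hs2⟩
  choose γ hγ0 hγ using ex
  have hγL : ∀ a a', |γ a - γ a'| ≤ η / c * ‖a - a'‖ := by
    have aux : ∀ a a', γ a' ≤ γ a → |γ a - γ a'| ≤ η / c * ‖a - a'‖ := by
      intro a a' h
      rw [abs_of_nonneg (sub_nonneg.2 h), div_mul_eq_mul_div, le_div_iff₀ hc]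
      have e1 := h1 a (γ a) (γ a') (hγ0 a') h
      have e2 := (norm_fst_le _).trans (h2 (γ a') a a' (hγ0 a'))
      simp only [Prod.fst_sub, Real.norm_eq_abs, abs_le] at e2
      nlinarith [hγ a, hγ a', e2.1]
    intro a a'
    rcases le_total (γ a') (γ a) with h | h
    · exact aux a a' h
    · rw [abs_sub_comm, norm_sub_rev]; exact aux a' a h
  have hctr : ContractingWith (1/2) (fun a => α - (q (γ a, a)).2) := by
    refine ⟨by norm_num [← NNReal.coe_lt_coe], LipschitzWith.of_dist_le_mul fun a a' => ?_⟩
    rw [dist_eq_norm, dist_eq_norm]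
    have e : (α - (q (γ a, a)).2) - (α - (q (γ a', a')).2) =
       (q (γ a', a') - q (γ a, a')).2 + (q (γ a, a') - q (γ a, a)).2 := by
      simp only [Prod.snd_sub]; abel
    rw [e]
    calc _ ≤ _ := norm_add_le _ _
      _ ≤ C * (η / c * ‖a - a'‖) + η * ‖a - a'‖ := by
        refine add_le_add ?_ ?_
        · refine (norm_snd_le _).trans ((h3' a' _ _ (hγ0 a) (hγ0 a')).trans ?_)
          rw [abs_sub_comm]
          gcongr
          exact hγL a a'
        · refine (norm_snd_le _).trans ?_
          rw [norm_sub_rev a a']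
          exact h2 _ _ _ (hγ0 a)
      _ = (η + C * (η / c)) * ‖a - a'‖ := by ring
      _ ≤ _ := by
        gcongr
        simpa using hsmall
  have : Nonempty A := ⟨α⟩
  have hfix := hctr.fixedPoint_isFixedPt
  set b := ContractingWith.fixedPoint _ hctr
  have hb : α - (q (γ b, b)).2 = b := hfix
  refine ⟨(γ b, b), hγ0 b, Prod.ext (hγ b) ?_⟩
  simp only [Prod.snd_add]
  nth_rewrite 1 [← hb]
  abel

theorem smoothTransition_lip : ∃ C : ℝ, 0 < C ∧
    ∀ x y : ℝ, |Real.smoothTransition x - Real.smoothTransition y| ≤ C * |x - y| := by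
  have h1 : ContDiffOn ℝ 1 Real.smoothTransition (Icc 0 1) :=
    (Real.smoothTransition.contDiff (n := 1)).contDiffOn
  have hl : LocallyLipschitzOn (Icc (0:ℝ) 1) Real.smoothTransition := by
    intro x hx
    exact (h1 x hx).exists_lipschitzOnWith (convex_Icc 0 1)
  obtain ⟨K, hK⟩ := hl.exists_lipschitzOnWith_of_compact isCompact_Icc
  refine ⟨K + 1, by positivity, fun x y => ?_⟩
  rw [← Real.smoothTransition.projIcc (x := x), ← Real.smoothTransition.projIcc (x := y)]
  have := hK.dist_le_mul _ (projIcc (0:ℝ) 1 zero_le_one x).2 _ (projIcc (0:ℝ) 1 zero_le_one y).2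
  rw [Real.dist_eq] at this
  refine this.trans ?_
  have h2 : dist (projIcc (0:ℝ) 1 zero_le_one x : ℝ) (projIcc (0:ℝ) 1 zero_le_one y) ≤ |x - y| := by
    have := (LipschitzWith.projIcc (zero_le_one (α := ℝ))).dist_le_mul x y
    simpa [Real.dist_eq, Subtype.dist_eq] using this
  calc _ ≤ (K:ℝ) * |x - y| := by gcongr
    _ ≤ _ := by gcongr; linarith

theorem exists_cutoff {δ s2 : ℝ} (hδ : 0 < δ) (hs2 : 0 < s2) : ∃ s0 : ℝ, 0 < s0 ∧ s0 ≤ s2 ∧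
    ∃ χ : ℝ → ℝ, ContDiff ℝ (⊤ : ℕ∞) χ ∧ (∀ s, 0 ≤ χ s) ∧ (∀ s, χ s ≤ 1) ∧
      (∀ s, 0 ≤ s → s ≤ s0 → χ s = 1) ∧ (∀ s, s2 ≤ s → χ s = 0) ∧
      ∀ s s', 0 ≤ s' → s' ≤ s → |χ s - χ s'| * s' ≤ δ * (s - s') := by
  obtain ⟨C, hC, hlip⟩ := smoothTransition_lip
  set s0 := s2 * Real.exp (-(C / δ)) with hs0
  have hs0p : 0 < s0 := by positivity
  have hcd : 0 < C / δ := by positivity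
  refine ⟨s0, hs0p, ?_, fun s => 1 - Real.smoothTransition (δ / C * Real.log (s / s0)), ?_, ?_, ?_,
    ?_, ?_, ?_⟩
  · have : Real.exp (-(C / δ)) ≤ 1 := Real.exp_le_one_iff.2 (by linarith)
    calc s0 ≤ s2 * 1 := by rw [hs0]; gcongr
      _ = s2 := mul_one _
  · rw [contDiff_iff_contDiffAt]
    intro s
    by_cases h : s = 0
    · subst h
      have : (fun s => 1 - Real.smoothTransition (δ / C * Real.log (s / s0))) =ᶠ[nhds 0]
          fun _ => (1:ℝ) := by
        filter_upwards [Ioo_mem_nhds (neg_lt_zero.2 hs0p) hs0p] with s hs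
        have : Real.log (s / s0) ≤ 0 := by
          rw [← Real.log_abs]
          refine Real.log_nonpos (abs_nonneg _) ?_
          rw [abs_div, abs_of_pos hs0p, div_le_one hs0p]
          exact (abs_lt.2 hs).le
        rw [Real.smoothTransition.zero_of_nonpos]
        · ring
        · exact mul_nonpos_of_nonneg_of_nonpos (by positivity) this
      exact contDiffAt_const.congr_of_eventuallyEq this
    · have h1 : ContDiffAt ℝ (⊤ : ℕ∞) (fun s => δ / C * Real.log (s / s0)) s := by
        refine contDiffAt_const.mul ((contDiffAt_id.div_const s0).log ?_)
        exact div_ne_zero h hs0p.ne'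
      exact contDiffAt_const.sub
        ((Real.smoothTransition.contDiff (n := ⊤)).contDiffAt.comp s h1)
  · intro s
    linarith [Real.smoothTransition.le_one (δ / C * Real.log (s / s0))]
  · intro s
    linarith [Real.smoothTransition.nonneg (δ / C * Real.log (s / s0))]
  · intro s hs hs'
    have : Real.log (s / s0) ≤ 0 := Real.log_nonpos (by positivity) ((div_le_one hs0p).2 hs')
    simp only
    rw [Real.smoothTransition.zero_of_nonpos]
    · ring
    · exact mul_nonpos_of_nonneg_of_nonpos (by positivity) this
  · intro s hs
    simp only
    rw [Real.smoothTransition.one_of_one_le]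
    · ring
    · have : C / δ ≤ Real.log (s / s0) := by
        rw [Real.le_log_iff_exp_le (div_pos (hs2.trans_le hs) hs0p), le_div_iff₀ hs0p, hs0,
          mul_left_comm, ← Real.exp_add]
        simpa using hs
      calc 1 = δ / C * (C / δ) := by field_simp
        _ ≤ _ := by gcongr
  · intro s s' hs' hss
    rcases hs'.eq_or_lt with h | h
    · subst h; simpa using mul_nonneg hδ.le hss
    have hsp : 0 < s := h.trans_le hss
    have h1 : |(1 - Real.smoothTransition (δ / C * Real.log (s / s0))) -
        (1 - Real.smoothTransition (δ / C * Real.log (s' / s0)))| ≤ C *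
          |δ / C * Real.log (s / s0) - δ / C * Real.log (s' / s0)| := by
      rw [sub_sub_sub_cancel_left, abs_sub_comm]
      exact hlip _ _
    have h2 : δ / C * Real.log (s / s0) - δ / C * Real.log (s' / s0) =
        δ / C * Real.log (s / s') := by
      rw [Real.log_div hsp.ne' hs0p.ne', Real.log_div h.ne' hs0p.ne', Real.log_div hsp.ne' h.ne']
      ring
    have h3 : 0 ≤ Real.log (s / s') := Real.log_nonneg ((one_le_div h).2 hss)
    have h4 : Real.log (s / s') ≤ s / s' - 1 := Real.log_le_sub_one_of_pos (by positivity)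
    rw [h2, abs_of_nonneg (mul_nonneg (by positivity) h3 : 0 ≤ δ / C * Real.log (s / s'))] at h1
    calc _ ≤ C * (δ / C * Real.log (s / s')) * s' := by gcongr
      _ ≤ C * (δ / C * (s / s' - 1)) * s' := by gcongr
      _ = δ * (s - s') := by field_simp

/-- The closed half space, with a time parameter. -/
def HR (A : Type*) : Set ((ℝ × A) × ℝ) := (Ici (0:ℝ) ×ˢ univ) ×ˢ univ

theorem mem_HR {A : Type*} {y : (ℝ × A) × ℝ} : y ∈ HR A ↔ 0 ≤ y.1.1 := by
  simp [HR]

theorem core_isotopy {A : Type*} [NormedAddCommGroup A] [NormedSpace ℝ A] [FiniteDimensional ℝ A]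
    {u : ℝ × A → ℝ × A} {s1 c C : ℝ} (hs1 : 0 < s1) (hc : 0 < c) (hc1 : c ≤ 1) (hC : 0 ≤ C)
    (hu : ContDiffOn ℝ (⊤ : ℕ∞) u (Icc 0 s1 ×ˢ univ))
    (h0 : ∀ a, u (0, a) = 0)
    (h1 : ∀ a s s', 0 ≤ s' → s' ≤ s → s ≤ s1 →
      -(1 - c) * (s - s') ≤ (u (s, a)).1 - (u (s', a)).1)
    (h2 : ∀ s a a', 0 ≤ s → s ≤ s1 → ‖u (s, a) - u (s, a')‖ ≤ C * s * ‖a - a'‖)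
    (h3 : ∀ a s s', 0 ≤ s' → s' ≤ s → s ≤ s1 → ‖u (s, a) - u (s', a)‖ ≤ C * (s - s')) :
    ∃ s0 s2 : ℝ, 0 < s0 ∧ s0 ≤ s1 ∧ ∃ k g : (ℝ × A) × ℝ → ℝ × A,
      ContDiffOn ℝ (⊤ : ℕ∞) k (HR A) ∧ ContDiffOn ℝ (⊤ : ℕ∞) g (HR A) ∧
      (∀ x t, 0 ≤ x.1 → 0 ≤ (k (x, t)).1) ∧ (∀ x t, 0 ≤ x.1 → 0 ≤ (g (x, t)).1) ∧
      (∀ x t, 0 ≤ x.1 → k (g (x, t), t) = x) ∧ (∀ x t, 0 ≤ x.1 → g (k (x, t), t) = x) ∧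
      (∀ x, k (x, 0) = x) ∧ (∀ a t, k ((0, a), t) = (0, a)) ∧
      (∀ x t, s2 ≤ x.1 → k (x, t) = x) ∧
      (∀ x, 0 ≤ x.1 → x.1 ≤ s0 → k (x, 1) = x + u x) ∧
      (∀ p : ℝ × A, p.1 = 0 → (∀ x, u (x + p) = u x) → ∀ x t, k (x + p, t) = k (x, t) + p) := by
  -- parameters
  obtain ⟨s2, hs2, hs21, hs2small⟩ : ∃ s2, 0 < s2 ∧ s2 < s1 ∧
      C * s2 + (C + 1) * (C * s2 / (c / 2)) ≤ 1 / 2 := by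
    set B := C + (C + 1) * (C / (c / 2)) with hB
    have hB0 : 0 ≤ B := by positivity
    refine ⟨min (s1 / 2) (1 / (2 * (B + 1))), by positivity,
      (min_le_left _ _).trans_lt (by linarith), ?_⟩
    have : C * min (s1 / 2) (1 / (2 * (B + 1))) +
      (C + 1) * (C * min (s1 / 2) (1 / (2 * (B + 1))) / (c / 2)) =
        B * min (s1 / 2) (1 / (2 * (B + 1))) := by rw [hB]; ring
    rw [this]
    calc _ ≤ B * (1 / (2 * (B + 1))) := by gcongr; exact min_le_right _ _
      _ ≤ 1 / 2 := by rw [mul_one_div, div_le_div_iff₀ (by positivity) (by positivity)]; linarith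
  obtain ⟨s0, hs0, hs02, χ, hχs, hχ0, hχ1, hχone, hχzero, hχd⟩ :=
    exists_cutoff (δ := c / 2 / (C + 1)) (s2 := s2) (by positivity) hs2
  have hu0 : ∀ a s, 0 ≤ s → s ≤ s1 → ‖u (s, a)‖ ≤ C * s := by
    intro a s hs hs'
    have := h3 a s 0 le_rfl hs hs'
    simpa [h0 a] using this
  set q : ℝ × A → ℝ × A := fun x => χ x.1 • u x with hq
  have hcross : ∀ a s s', 0 ≤ s' → s' ≤ s → s' ≤ s1 →
      ‖(χ s - χ s') • u (s', a)‖ ≤ c / 2 * (s - s') := by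
    intro a s s' hs' hss hs1'
    rw [norm_smul, Real.norm_eq_abs]
    have e1 := hu0 a s' hs' hs1'
    have e2 := hχd s s' hs' hss
    calc |χ s - χ s'| * ‖u (s', a)‖ ≤ |χ s - χ s'| * (C * s') := by gcongr
      _ = C * (|χ s - χ s'| * s') := by ring
      _ ≤ C * (c / 2 / (C + 1) * (s - s')) := by gcongr
      _ ≤ (C + 1) * (c / 2 / (C + 1) * (s - s')) := by
        have : 0 ≤ c / 2 / (C + 1) * (s - s') :=
          mul_nonneg (by positivity) (sub_nonneg.2 hss)
        gcongr; linarith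
      _ = _ := by field_simp
  have hqz : ∀ a s, s2 ≤ s → q (s, a) = 0 := by
    intro a s hs
    simp [hq, hχzero s hs]
  have hsplit : ∀ a s s', q (s, a) - q (s', a) =
      χ s • (u (s, a) - u (s', a)) + (χ s - χ s') • u (s', a) := by
    intro a s s'
    simp only [hq, smul_sub, sub_smul]; abel
  have q0 : ∀ a, q (0, a) = 0 := fun a => by simp [hq, h0 a]
  have q1 : ∀ a s s', 0 ≤ s' → s' ≤ s →
      -(1 - c / 2) * (s - s') ≤ (q (s, a)).1 - (q (s', a)).1 := by
    intro a s s' hs' hss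
    have hd : 0 ≤ s - s' := sub_nonneg.2 hss
    rcases le_or_gt s2 s' with h | h
    · rw [hqz a s (h.trans hss), hqz a s' h]
      simp only [Prod.fst_zero, sub_zero]
      nlinarith
    have hcr := (norm_fst_le _).trans (hcross a s s' hs' hss (by linarith))
    have hsp := congrArg Prod.fst (hsplit a s s')
    rw [Real.norm_eq_abs, abs_le] at hcr
    simp only [Prod.fst_sub, Prod.fst_add, Prod.smul_fst, smul_eq_mul] at hsp hcr
    rw [hsp]
    rcases le_or_gt s2 s with h' | h'
    · rw [hχzero s h'] at hcr ⊢
      nlinarith [hcr.1]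
    · have e := h1 a s s' hs' hss (by linarith)
      have e' : χ s * (-(1 - c) * (s - s')) ≤ χ s * ((u (s, a)).1 - (u (s', a)).1) :=
        mul_le_mul_of_nonneg_left e (hχ0 s)
      have e'' : (1 - χ s) * ((1 - c) * (s - s')) ≥ 0 :=
        mul_nonneg (by linarith [hχ1 s]) (mul_nonneg (by linarith) hd)
      nlinarith [hcr.1]
  have q2 : ∀ s a a', 0 ≤ s → ‖q (s, a) - q (s, a')‖ ≤ C * s2 * ‖a - a'‖ := by
    intro s a a' hs
    rcases le_or_gt s2 s with h | h
    · rw [hqz a s h, hqz a' s h]; simp; positivity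
    · have : q (s, a) - q (s, a') = χ s • (u (s, a) - u (s, a')) := by simp [hq, smul_sub]
      rw [this, norm_smul, Real.norm_eq_abs, abs_of_nonneg (hχ0 s)]
      have e := h2 s a a' hs (by linarith)
      calc χ s * ‖u (s, a) - u (s, a')‖ ≤ 1 * (C * s * ‖a - a'‖) := by gcongr; exact hχ1 s
        _ ≤ C * s2 * ‖a - a'‖ := by rw [one_mul]; gcongr
  have q3 : ∀ a s s', 0 ≤ s' → s' ≤ s → ‖q (s, a) - q (s', a)‖ ≤ (C + 1) * (s - s') := by
    intro a s s' hs' hss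
    have hd : 0 ≤ s - s' := sub_nonneg.2 hss
    rcases le_or_gt s2 s' with h | h
    · rw [hqz a s (h.trans hss), hqz a s' h]
      simp; positivity
    have hcr := hcross a s s' hs' hss (by linarith)
    rw [hsplit]
    refine (norm_add_le _ _).trans ?_
    have e : ‖χ s • (u (s, a) - u (s', a))‖ ≤ C * (s - s') := by
      rcases le_or_gt s2 s with h' | h'
      · rw [hχzero s h']; simp; positivity
      · rw [norm_smul, Real.norm_eq_abs, abs_of_nonneg (hχ0 s)]
        calc _ ≤ 1 * (C * (s - s')) := by
              gcongr
              · exact hχ1 s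
              · exact h3 a s s' hs' hss (by linarith)
          _ = _ := one_mul _
    nlinarith
  have qb : ∀ x : ℝ × A, 0 ≤ x.1 → ‖q x‖ ≤ C * s2 := by
    rintro ⟨s, a⟩ hs
    rcases le_or_gt s2 s with h | h
    · rw [hqz a s h]; simp; positivity
    · simp only [hq]
      rw [norm_smul, Real.norm_eq_abs, abs_of_nonneg (hχ0 s)]
      calc _ ≤ 1 * (C * s) := by
              gcongr
              · exact hχ1 s
              · exact hu0 a s hs (by linarith)
          _ ≤ C * s2 := by rw [one_mul]; gcongr
  have qsm : ContDiffOn ℝ (⊤ : ℕ∞) q (Ici (0:ℝ) ×ˢ univ) := by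
    rintro ⟨s, a⟩ ⟨hs, -⟩
    have hs : 0 ≤ s := hs
    rcases lt_or_ge s s1 with h | h
    · have e1 : ContDiffWithinAt ℝ (⊤ : ℕ∞) q (Icc 0 s1 ×ˢ univ) (s, a) := by
        have e0 : ContDiffWithinAt ℝ (⊤ : ℕ∞) (fun x : ℝ × A => χ x.1) (Icc 0 s1 ×ˢ univ) (s, a) :=
          (hχs.comp contDiff_fst).contDiffWithinAt
        exact e0.smul (hu (s, a) ⟨⟨hs, h.le⟩, mem_univ _⟩)
      refine e1.mono_of_mem_nhdsWithin ?_
      have : (Iio s1 ×ˢ (univ : Set A)) ∈ nhds (s, a) :=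
        (isOpen_Iio.prod isOpen_univ).mem_nhds ⟨h, mem_univ _⟩
      filter_upwards [self_mem_nhdsWithin, nhdsWithin_le_nhds this] with x hx hx'
      exact ⟨⟨hx.1, le_of_lt hx'.1⟩, mem_univ _⟩
    · have : (Ioi s2 ×ˢ (univ : Set A)) ∈ nhds (s, a) :=
        (isOpen_Ioi.prod isOpen_univ).mem_nhds ⟨hs21.trans_le h, mem_univ _⟩
      refine (contDiffWithinAt_const (c := (0 : ℝ × A))).congr_of_eventuallyEq ?_
        (hqz a s (hs21.le.trans h))
      filter_upwards [nhdsWithin_le_nhds this] with x hx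
      exact hqz x.2 x.1 (le_of_lt hx.1)
  obtain ⟨Cσ, hCσ, hσL⟩ := smoothTransition_lip
  set σ := Real.smoothTransition with hσ
  have σ0 : ∀ t, 0 ≤ σ t := Real.smoothTransition.nonneg
  have σ1 : ∀ t, σ t ≤ 1 := Real.smoothTransition.le_one
  -- scaled estimates
  have r0 : ∀ t a, (σ t • q) (0, a) = 0 := fun t a => by simp [q0 a]
  have r1 : ∀ t a s s', 0 ≤ s' → s' ≤ s →
      -(1 - c / 2) * (s - s') ≤ ((σ t • q) (s, a)).1 - ((σ t • q) (s', a)).1 := by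
    intro t a s s' hs' hss
    have e := q1 a s s' hs' hss
    have hd : 0 ≤ s - s' := sub_nonneg.2 hss
    simp only [Pi.smul_apply, Prod.smul_fst, smul_eq_mul]
    have e' := mul_le_mul_of_nonneg_left e (σ0 t)
    have e'' : (1 - σ t) * ((1 - c / 2) * (s - s')) ≥ 0 :=
        mul_nonneg (by linarith [σ1 t]) (mul_nonneg (by linarith) hd)
    nlinarith
  have r2 : ∀ t s a a', 0 ≤ s →
      ‖(σ t • q) (s, a) - (σ t • q) (s, a')‖ ≤ C * s2 * ‖a - a'‖ := by
    intro t s a a' hs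
    simp only [Pi.smul_apply]
    rw [← smul_sub, norm_smul, Real.norm_eq_abs, abs_of_nonneg (σ0 t)]
    calc _ ≤ 1 * (C * s2 * ‖a - a'‖) := by
          gcongr
          · exact σ1 t
          · exact q2 s a a' hs
      _ = _ := one_mul _
  have r3 : ∀ t a s s', 0 ≤ s' → s' ≤ s →
      ‖(σ t • q) (s, a) - (σ t • q) (s', a)‖ ≤ (C + 1) * (s - s') := by
    intro t a s s' hs' hss
    simp only [Pi.smul_apply]
    rw [← smul_sub, norm_smul, Real.norm_eq_abs, abs_of_nonneg (σ0 t)]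
    calc _ ≤ 1 * ((C + 1) * (s - s')) := by
          gcongr
          · exact σ1 t
          · exact q3 a s s' hs' hss
      _ = _ := one_mul _
  have : CompleteSpace A := FiniteDimensional.complete ℝ A
  have anti := fun t => block_antilip (q := σ t • q) (c := c / 2) (C := C + 1) (η := C * s2)
    (by positivity) (by positivity) (by positivity) hs2small (r1 t) (r2 t) (r3 t)
  have surj := fun t => block_surj (q := σ t • q) (c := c / 2) (C := C + 1) (η := C * s2)
    (by positivity) (by positivity) (by positivity) hs2small (r0 t) (r1 t) (r2 t) (r3 t)
  set L := (2 * (1 + (C + 1) / (c / 2)) +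
    (1 + C * s2 * (2 * (1 + (C + 1) / (c / 2)))) / (c / 2)) with hL
  have hL0 : 0 ≤ L := by positivity
  set k : (ℝ × A) × ℝ → ℝ × A := fun y => y.1 + σ y.2 • q y.1 with hk
  have hkH : ∀ x t, 0 ≤ x.1 → 0 ≤ (k (x, t)).1 := by
    rintro ⟨s, a⟩ t hs
    have e := r1 t a s 0 le_rfl hs
    rw [r0 t a] at e
    have hs' : 0 ≤ s := hs
    simp only [Pi.smul_apply, Prod.fst_zero, sub_zero, Prod.smul_fst, smul_eq_mul] at e
    simp only [hk, Prod.fst_add, Prod.smul_fst, smul_eq_mul]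
    nlinarith
  have exg : ∀ y : (ℝ × A) × ℝ, ∃ x : ℝ × A, 0 ≤ y.1.1 → (0 ≤ x.1 ∧ k (x, y.2) = y.1) := by
    intro y
    by_cases h : 0 ≤ y.1.1
    · obtain ⟨x, hx, hx'⟩ := surj y.2 y.1 h
      exact ⟨x, fun _ => ⟨hx, hx'⟩⟩
    · exact ⟨0, fun h' => absurd h' h⟩
  choose g hg using exg
  have hkinj : ∀ t x y, 0 ≤ x.1 → 0 ≤ y.1 → k (x, t) = k (y, t) → x = y := by
    intro t x y hx hy he
    have e := anti t x y hx hy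
    have : (x + (σ t • q) x) - (y + (σ t • q) y) = 0 := sub_eq_zero.2 he
    rw [this] at e
    simpa [sub_eq_zero] using e
  have hksm : ContDiffOn ℝ (⊤ : ℕ∞) k (HR A) := by
    have e1 : ContDiffOn ℝ (⊤ : ℕ∞) (fun y : (ℝ × A) × ℝ => σ y.2) (HR A) :=
      ((Real.smoothTransition.contDiff (n := ⊤)).comp contDiff_snd).contDiffOn
    have e2 : ContDiffOn ℝ (⊤ : ℕ∞) (fun y : (ℝ × A) × ℝ => q y.1) (HR A) :=
      qsm.comp contDiff_fst.contDiffOn (fun y hy => hy.1)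
    exact contDiff_fst.contDiffOn.add (e1.smul e2)
  have hgsm : ContDiffOn ℝ (⊤ : ℕ∞) (fun y => (g y, y.2)) (HR A) := by
    refine smooth_inverse (k := fun y : (ℝ × A) × ℝ => (k y, y.2))
      (L := L * (1 + Cσ * (C * s2)) + 1) ?_ ?_ ?_ ?_ ?_ ?_
    · exact ((uniqueDiffOn_Ici 0).prod uniqueDiffOn_univ).prod uniqueDiffOn_univ
    · intro x hx v
      rw [mem_HR] at hx
      rcases le_total 0 v.1.1 with h | h
      · left; intro τ hτ; rw [mem_HR]
        simp only [Prod.fst_add, Prod.smul_fst, smul_eq_mul]; positivity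
      · right; intro τ hτ; rw [mem_HR]
        simp only [Prod.fst_add, Prod.smul_fst, smul_eq_mul, Prod.fst_neg]
        have : 0 ≤ -v.1.1 := by linarith
        positivity
    · exact hksm.prodMk contDiff_snd.contDiffOn
    · intro y hy
      rw [mem_HR] at hy ⊢
      exact (hg y hy).1
    · intro y hy
      rw [mem_HR] at hy
      exact Prod.ext (hg y hy).2 rfl
    · rintro ⟨x, t⟩ hx ⟨x', t'⟩ hx'
      rw [mem_HR] at hx hx'
      simp only at hx hx'
      set D := ‖(k (x, t), t) - (k (x', t'), t')‖ with hD
      have d1 : ‖k (x, t) - k (x', t')‖ ≤ D := norm_fst_le ((k (x, t), t) - (k (x', t'), t'))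
      have d2 : |t - t'| ≤ D := norm_snd_le ((k (x, t), t) - (k (x', t'), t'))
      have hD0 : 0 ≤ D := norm_nonneg _
      have e := anti t x x' hx hx'
      have e2 : (x + (σ t • q) x) - (x' + (σ t • q) x') =
          (k (x, t) - k (x', t')) - (σ t - σ t') • q x' := by
        simp only [hk, Pi.smul_apply, sub_smul]; abel
      have e3 : ‖(σ t - σ t') • q x'‖ ≤ Cσ * (C * s2) * D := by
        rw [norm_smul, Real.norm_eq_abs]
        calc _ ≤ (Cσ * |t - t'|) * (C * s2) := by
              gcongr
              · exact hσL t t'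
              · exact qb x' hx'
          _ ≤ (Cσ * D) * (C * s2) := by gcongr
          _ = _ := by ring
      have e4 : ‖x - x'‖ ≤ L * (1 + Cσ * (C * s2)) * D := by
        refine e.trans ?_
        rw [e2, mul_assoc]
        gcongr
        refine (norm_sub_le _ _).trans ?_
        linarith
      have e5 : 0 ≤ L * (1 + Cσ * (C * s2)) * D := by positivity
      rw [Prod.norm_def]
      refine max_le ?_ ?_
      · simp only [Prod.fst_sub]; linarith
      · simp only [Prod.snd_sub, Real.norm_eq_abs]; linarith
  refine ⟨s0, s2, hs0, hs02.trans hs21.le, k, g, hksm, contDiff_fst.comp_contDiffOn hgsm, hkH,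
    fun x t hx => (hg (x, t) hx).1, fun x t hx => (hg (x, t) hx).2, ?_, ?_, ?_, ?_, ?_, ?_⟩
  · intro x t hx
    have hx' := hkH x t hx
    exact hkinj t _ _ (hg (k (x, t), t) hx').1 hx (hg (k (x, t), t) hx').2
  · intro x
    simp [hk, hσ]
  · intro a t
    simp [hk, q0 a]
  · intro x t hx
    simp [hk, hqz x.2 x.1 hx]
  · intro x hx hx'
    simp [hk, hσ, hq, hχone x.1 hx hx']
  · intro p hp hper x t
    simp only [hk, hq, hper x, Prod.fst_add, hp, add_zero]
    abel

theorem lip_of_contDiffOn {E F : Type*} [NormedAddCommGroup E] [NormedSpace ℝ E]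
    [NormedAddCommGroup F] [NormedSpace ℝ F] {f : E → F} {B : Set E} (hB : IsCompact B)
    (hc : Convex ℝ B) (hf : ContDiffOn ℝ 1 f B) :
    ∃ K : ℝ, 0 ≤ K ∧ ∀ x ∈ B, ∀ y ∈ B, ‖f x - f y‖ ≤ K * ‖x - y‖ := by
  have hl : LocallyLipschitzOn B f := fun x hx => (hf x hx).exists_lipschitzOnWith hc
  obtain ⟨K, hK⟩ := hl.exists_lipschitzOnWith_of_compact hB
  refine ⟨K, K.2, fun x hx y hy => ?_⟩
  simpa [dist_eq_norm] using hK.dist_le_mul x hx y hy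

theorem exists_translate (a : ℝ × ℝ) : ∃ m n : ℤ,
    a + ((m : ℝ) * (2 * Real.pi), (n : ℝ) * (2 * Real.pi)) ∈ closedBall (0 : ℝ × ℝ) 7 := by
  have key : ∀ θ : ℝ, ∃ m : ℤ, |θ + (m : ℝ) * (2 * Real.pi)| ≤ 7 := by
    intro θ
    have h2 : 0 < 2 * Real.pi := by positivity
    refine ⟨-⌊θ / (2 * Real.pi)⌋, ?_⟩
    have e1 := Int.floor_le (θ / (2 * Real.pi))
    have e2 := Int.lt_floor_add_one (θ / (2 * Real.pi))
    rw [le_div_iff₀ h2] at e1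
    rw [div_lt_iff₀ h2] at e2
    have := Real.pi_lt_d2
    rw [abs_le]
    push_cast
    constructor <;> nlinarith
  obtain ⟨m, hm⟩ := key a.1
  obtain ⟨n, hn⟩ := key a.2
  refine ⟨m, n, ?_⟩
  rw [mem_closedBall_zero_iff, Prod.norm_def]
  exact max_le hm hn

theorem collar_bounds {u : ℝ × (ℝ × ℝ) → ℝ × (ℝ × ℝ)} {s1 : ℝ} (hs1 : 0 < s1)
    (hu : ContDiffOn ℝ (⊤ : ℕ∞) u (Icc 0 s1 ×ˢ univ))
    (h0 : ∀ a, u (0, a) = 0)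
    (hper : ∀ (m n : ℤ) s a,
      u (s, a + ((m : ℝ) * (2 * Real.pi), (n : ℝ) * (2 * Real.pi))) = u (s, a))
    (hpos : ∀ a, -1 < (fderivWithin ℝ u (Icc 0 s1 ×ˢ univ) (0, a) (1, 0)).1) :
    ∃ s2 c C : ℝ, 0 < s2 ∧ s2 ≤ s1 ∧ 0 < c ∧ c ≤ 1 ∧ 0 ≤ C ∧
    (∀ a s s', 0 ≤ s' → s' ≤ s → s ≤ s2 →
      -(1 - c) * (s - s') ≤ (u (s, a)).1 - (u (s', a)).1) ∧
    (∀ s a a', 0 ≤ s → s ≤ s2 → ‖u (s, a) - u (s, a')‖ ≤ C * s * ‖a - a'‖) ∧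
    (∀ a s s', 0 ≤ s' → s' ≤ s → s ≤ s2 → ‖u (s, a) - u (s', a)‖ ≤ C * (s - s')) := by
  set S : Set (ℝ × (ℝ × ℝ)) := Icc 0 s1 ×ˢ univ with hS
  set D := fderivWithin ℝ u S with hD
  have hSu : UniqueDiffOn ℝ S := (uniqueDiffOn_Icc hs1).prod uniqueDiffOn_univ
  have hDs : ContDiffOn ℝ (⊤ : ℕ∞) D S := hu.fderivWithin hSu (by simp)
  have hdu : ∀ x ∈ S, HasFDerivWithinAt u (D x) S x := fun x hx =>
    ((hu x hx).differentiableWithinAt (by simp)).hasFDerivWithinAt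
  set B : Set (ℝ × (ℝ × ℝ)) := Icc 0 s1 ×ˢ closedBall 0 21 with hB
  have hBS : B ⊆ S := fun x hx => ⟨hx.1, mem_univ _⟩
  have hBc : IsCompact B := isCompact_Icc.prod (isCompact_closedBall _ _)
  have hBv : Convex ℝ B := (convex_Icc _ _).prod (convex_closedBall _ _)
  obtain ⟨K1, hK1, hL1⟩ := lip_of_contDiffOn hBc hBv ((hu.mono hBS).of_le (by exact_mod_cast le_top))
  obtain ⟨K2, hK2, hL2⟩ := lip_of_contDiffOn hBc hBv ((hDs.mono hBS).of_le (by exact_mod_cast le_top))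
  -- lower bound
  obtain ⟨a0, -, ha0⟩ := (isCompact_closedBall (0 : ℝ × ℝ) 21).exists_isMinOn
    ⟨0, by simp⟩ (f := fun a => (D (0, a) (1, 0)).1) (by
      have : ContinuousOn (fun a : ℝ × ℝ => D (0, a)) (closedBall 0 21) :=
        hDs.continuousOn.comp (by fun_prop) (fun a _ => ⟨⟨le_rfl, hs1.le⟩, mem_univ _⟩)
      exact continuous_fst.comp_continuousOn (this.clm_apply continuousOn_const))
  set m := (D (0, a0) (1, 0)).1 with hm
  have hm1 : -1 < m := hpos a0
  set c := min ((m + 1) / 2) 1 with hc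
  have hc0 : 0 < c := lt_min (by linarith) one_pos
  have hcm : -1 + 2 * c ≤ m := by linarith [min_le_left ((m + 1) / 2) 1]
  set s2 := min s1 (c / (K2 + 1)) with hs2
  have hs20 : 0 < s2 := lt_min hs1 (by positivity)
  have hs21 : s2 ≤ s1 := min_le_left _ _
  have hs2K : K2 * s2 ≤ c := by
    calc K2 * s2 ≤ (K2 + 1) * (c / (K2 + 1)) := by
          gcongr
          · linarith
          · exact min_le_right _ _
      _ = c := by field_simp
  have hDl : ∀ s a, 0 ≤ s → s ≤ s2 → a ∈ closedBall (0 : ℝ × ℝ) 21 →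
      ‖D (s, a) - D (0, a)‖ ≤ K2 * s := by
    intro s a hs hs' ha
    have := hL2 (s, a) ⟨⟨hs, hs'.trans hs21⟩, ha⟩ (0, a) ⟨⟨le_rfl, hs1.le⟩, ha⟩
    simpa [Prod.norm_def, abs_of_nonneg hs, hs] using this
  have h21 : closedBall (0 : ℝ × ℝ) 7 ⊆ closedBall 0 21 := closedBall_subset_closedBall (by norm_num)
  refine ⟨s2, c, K1 + K2, hs20, hs21, hc0, min_le_right _ _, by positivity, ?_, ?_, ?_⟩
  · intro a s s' hs' hss hs
    obtain ⟨i, j, hij⟩ := exists_translate a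
    rw [← hper i j s a, ← hper i j s' a]
    have hb := h21 hij
    set b := a + ((i : ℝ) * (2 * Real.pi), (j : ℝ) * (2 * Real.pi))
    set w := D (0, b) (1, 0) with hw
    have hder : ∀ x ∈ Icc 0 s2, HasDerivWithinAt (fun x : ℝ => u (x, b) - x • w)
        (D (x, b) (1, 0) - w) (Icc 0 s2) x := by
      intro x hx
      have e1 : HasDerivWithinAt (fun x : ℝ => (x, b)) (1, 0) (Icc 0 s2) x :=
        (hasDerivWithinAt_id x _).prodMk (hasDerivWithinAt_const x _ b)
      have e0 : MapsTo (fun x : ℝ => (x, b)) (Icc 0 s2) S :=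
        fun y hy => ⟨⟨hy.1, hy.2.trans hs21⟩, mem_univ _⟩
      have e2 : HasDerivWithinAt (fun x : ℝ => u (x, b)) (D (x, b) (1, 0)) (Icc 0 s2) x :=
        (hdu (x, b) (e0 hx)).comp_hasDerivWithinAt x e1 e0
      have e3 : HasDerivWithinAt (fun x : ℝ => x • w) w (Icc 0 s2) x := by
        simpa using (hasDerivWithinAt_id x (Icc 0 s2)).smul_const w
      exact e2.sub e3
    have := Convex.norm_image_sub_le_of_norm_hasDerivWithin_le (C := c) hder (fun x hx => by
      have e : D (x, b) (1, 0) - w = (D (x, b) - D (0, b)) (1, 0) := by simp [hw]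
      rw [e]
      refine (ContinuousLinearMap.le_opNorm _ _).trans ?_
      have n1 : ‖((1:ℝ), (0 : ℝ × ℝ))‖ = 1 := by simp [Prod.norm_def]
      rw [n1, mul_one]
      refine (hDl x b hx.1 hx.2 hb).trans (le_trans ?_ hs2K)
      gcongr
      exact hx.2) (convex_Icc 0 s2) (x := s') (y := s) ⟨hs', hss.trans hs⟩ ⟨hs'.trans hss, hs⟩
    have h3 := (norm_fst_le _).trans this
    have hd : 0 ≤ s - s' := sub_nonneg.2 hss
    simp only [Prod.fst_sub, Prod.smul_fst, smul_eq_mul, Real.norm_eq_abs, abs_of_nonneg hd,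
      abs_le] at h3
    have hwm : m ≤ w.1 := ha0 hb
    nlinarith [h3.1]
  · intro s a a' hs hs'
    have hnear : ∀ b ∈ closedBall (0 : ℝ × ℝ) 21, ∀ b' ∈ closedBall (0 : ℝ × ℝ) 21,
        ‖u (s, b) - u (s, b')‖ ≤ K2 * s * ‖b - b'‖ := by
      intro b hb b' hb'
      have hinr : ∀ x : ℝ × ℝ, ∀ v : ℝ × ℝ, D (0, x) (0, v) = 0 := by
        intro x v
        have e1 : HasFDerivAt (fun y : ℝ × ℝ => ((0:ℝ), y)) (ContinuousLinearMap.inr ℝ ℝ (ℝ × ℝ)) x :=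
          hasFDerivAt_prodMk_right 0 x
        have e2 : HasFDerivAt (fun y : ℝ × ℝ => u ((0:ℝ), y))
            ((D (0, x)).comp (ContinuousLinearMap.inr ℝ ℝ (ℝ × ℝ))) x := by
          rw [← hasFDerivWithinAt_univ] at e1 ⊢
          exact (hdu (0, x) ⟨⟨le_rfl, hs1.le⟩, mem_univ _⟩).comp x e1
            (fun y _ => ⟨⟨le_rfl, hs1.le⟩, mem_univ _⟩)
        have e3 : (fun y : ℝ × ℝ => u ((0:ℝ), y)) = fun _ => 0 := funext h0
        rw [e3] at e2
        have := e2.unique (hasFDerivAt_const _ _)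
        simpa using DFunLike.congr_fun this v
      have hder : ∀ x ∈ closedBall (0 : ℝ × ℝ) 21, HasFDerivWithinAt (fun y : ℝ × ℝ => u (s, y))
          ((D (s, x)).comp (ContinuousLinearMap.inr ℝ ℝ (ℝ × ℝ))) (closedBall 0 21) x := by
        intro x hx
        exact (hdu (s, x) ⟨⟨hs, hs'.trans hs21⟩, mem_univ _⟩).comp x
          (hasFDerivAt_prodMk_right s x).hasFDerivWithinAt
          (fun y _ => ⟨⟨hs, hs'.trans hs21⟩, mem_univ _⟩)
      refine Convex.norm_image_sub_le_of_norm_hasFDerivWithin_le hder (fun x hx => ?_)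
        (convex_closedBall _ _) hb' hb
      refine ContinuousLinearMap.opNorm_le_bound _ (by positivity) fun v => ?_
      have e : ((D (s, x)).comp (ContinuousLinearMap.inr ℝ ℝ (ℝ × ℝ))) v =
          (D (s, x) - D (0, x)) (0, v) := by
        simp [hinr x v]
      rw [e]
      refine (ContinuousLinearMap.le_opNorm _ _).trans ?_
      have n1 : ‖((0:ℝ), v)‖ = ‖v‖ := by simp
      rw [n1]
      gcongr
      exact hDl s x hs hs' hx
    have hfin : ‖u (s, a) - u (s, a')‖ ≤ K2 * s * ‖a - a'‖ := by
      obtain ⟨i, j, hij⟩ := exists_translate a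
      rcases le_or_gt ‖a - a'‖ 14 with h | h
      · rw [← hper i j s a, ← hper i j s a']
        refine (hnear _ (h21 hij) _ ?_).trans ?_
        · rw [mem_closedBall_zero_iff] at hij ⊢
          set p : ℝ × ℝ := ((i : ℝ) * (2 * Real.pi), (j : ℝ) * (2 * Real.pi))
          have : a' + p = (a + p) - (a - a') := by abel
          rw [this]
          exact (norm_sub_le _ _).trans (by linarith)
        · rw [add_sub_add_right_eq_sub]
      · obtain ⟨i', j', hij'⟩ := exists_translate a'
        rw [← hper i j s a, ← hper i' j' s a']
        refine (hnear _ (h21 hij) _ (h21 hij')).trans ?_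
        gcongr
        rw [mem_closedBall_zero_iff] at hij hij'
        refine (norm_sub_le _ _).trans ?_
        linarith
    refine hfin.trans ?_
    gcongr
    linarith
  · intro a s s' hs' hss hs
    obtain ⟨i, j, hij⟩ := exists_translate a
    rw [← hper i j s a, ← hper i j s' a]
    have hb := h21 hij
    set b := a + ((i : ℝ) * (2 * Real.pi), (j : ℝ) * (2 * Real.pi))
    have hd : 0 ≤ s - s' := sub_nonneg.2 hss
    have := hL1 (s, b) ⟨⟨hs'.trans hss, hs.trans hs21⟩, hb⟩ (s', b)
      ⟨⟨hs', (hss.trans hs).trans hs21⟩, hb⟩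
    have n : ‖(s, b) - (s', b)‖ = s - s' := by simp [Prod.norm_def, abs_of_nonneg hd, hd]
    rw [n] at this
    refine this.trans ?_
    gcongr
    linarith

/-- The solid torus. -/
def MM : Set (ℂ × ℂ) := (closedBall (0:ℂ) 1) ×ˢ (sphere (0:ℂ) 1)

/-- Logarithmic polar coordinates on the solid torus. -/
noncomputable def EE (x : ℝ × (ℝ × ℝ)) : ℂ × ℂ :=
  (Complex.exp (-(x.1 : ℂ) + (x.2.1 : ℂ) * Complex.I), Complex.exp ((x.2.2 : ℂ) * Complex.I))

/-- The untwisting shift in the coordinates. -/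
noncomputable def TT (x : ℝ × (ℝ × ℝ)) : ℝ × (ℝ × ℝ) :=
  (x.1, (x.2.1, x.2.2 - (1 - Real.exp (-x.1))))

theorem ofReal_contDiff : ContDiff ℝ (⊤ : ℕ∞) (fun x : ℝ => (x : ℂ)) := Complex.ofRealCLM.contDiff

theorem cexp_contDiff : ContDiff ℝ (⊤ : ℕ∞) Complex.exp := Complex.contDiff_exp

theorem EE_contDiff : ContDiff ℝ (⊤ : ℕ∞) EE := by
  unfold EE
  refine ContDiff.prodMk (cexp_contDiff.comp ?_) (cexp_contDiff.comp ?_)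
  · exact (ofReal_contDiff.comp contDiff_fst).neg.add
      ((ofReal_contDiff.comp (contDiff_fst.comp contDiff_snd)).mul contDiff_const)
  · exact ((ofReal_contDiff.comp (contDiff_snd.comp contDiff_snd)).mul contDiff_const)

theorem TT_contDiff : ContDiff ℝ (⊤ : ℕ∞) TT := by
  unfold TT
  refine ContDiff.prodMk contDiff_fst (ContDiff.prodMk (contDiff_fst.comp contDiff_snd) ?_)
  exact (contDiff_snd.comp contDiff_snd).sub (contDiff_const.sub (Real.contDiff_exp.comp contDiff_fst.neg))

theorem norm_EE_fst (x : ℝ × (ℝ × ℝ)) : ‖(EE x).1‖ = Real.exp (-x.1) := by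
  simp [EE, Complex.norm_exp]

theorem norm_EE_snd (x : ℝ × (ℝ × ℝ)) : ‖(EE x).2‖ = 1 := by
  simp [EE, Complex.norm_exp]

theorem EE_mem {x : ℝ × (ℝ × ℝ)} (hx : 0 ≤ x.1) : EE x ∈ MM := by
  refine ⟨?_, ?_⟩
  · rw [mem_closedBall_zero_iff, norm_EE_fst]
    exact Real.exp_le_one_iff.2 (by linarith)
  · rw [mem_sphere_zero_iff_norm, norm_EE_snd]

theorem EE_mem_bd (a : ℝ × ℝ) : EE (0, a) ∈ (sphere (0:ℂ) 1) ×ˢ (sphere (0:ℂ) 1) := by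
  refine ⟨?_, ?_⟩
  · rw [mem_sphere_zero_iff_norm, norm_EE_fst]; simp
  · rw [mem_sphere_zero_iff_norm, norm_EE_snd]

theorem cexp_period (m : ℤ) : Complex.exp (((m : ℝ) * (2 * Real.pi) : ℝ) * Complex.I) = 1 := by
  rw [Complex.exp_eq_one_iff]
  exact ⟨m, by push_cast; ring⟩

theorem EE_period (m n : ℤ) (s : ℝ) (a : ℝ × ℝ) :
    EE (s, a + ((m : ℝ) * (2 * Real.pi), (n : ℝ) * (2 * Real.pi))) = EE (s, a) := by
  unfold EE
  have h1 := cexp_period m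
  have h2 := cexp_period n
  simp only [Prod.fst_add, Prod.snd_add]
  refine Prod.ext ?_ ?_
  · simp only
    rw [Complex.ofReal_add, add_mul, ← add_assoc, Complex.exp_add, h1, mul_one]
  · simp only
    rw [Complex.ofReal_add, add_mul, Complex.exp_add, h2, mul_one]

theorem EE_add (x y : ℝ × (ℝ × ℝ)) : EE (x + y) =
    ((EE x).1 * Complex.exp (-(y.1 : ℂ) + (y.2.1 : ℂ) * Complex.I),
      (EE x).2 * Complex.exp ((y.2.2 : ℂ) * Complex.I)) := by
  unfold EE
  refine Prod.ext ?_ ?_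
  · simp only [Prod.fst_add, Prod.snd_add]
    rw [← Complex.exp_add]; congr 1; push_cast; ring
  · simp only [Prod.snd_add]
    rw [← Complex.exp_add]; congr 1; push_cast; ring

theorem EE_inj {x y : ℝ × (ℝ × ℝ)} (h : EE x = EE y) : ∃ m n : ℤ,
    x = (y.1, y.2 + ((m : ℝ) * (2 * Real.pi), (n : ℝ) * (2 * Real.pi))) := by
  have h1 : ‖(EE x).1‖ = ‖(EE y).1‖ := by rw [h]
  rw [norm_EE_fst, norm_EE_fst] at h1
  have h1' : x.1 = y.1 := by
    have := Real.exp_injective h1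
    linarith
  have h2 := congrArg Prod.fst h
  have h3 := congrArg Prod.snd h
  simp only [EE] at h2 h3
  rw [Complex.exp_eq_exp_iff_exists_int] at h2 h3
  obtain ⟨m, hm⟩ := h2
  obtain ⟨n, hn⟩ := h3
  refine ⟨m, n, Prod.ext h1' (Prod.ext ?_ ?_)⟩
  · have := congrArg Complex.im hm
    simpa [mul_assoc] using this
  · have := congrArg Complex.im hn
    simpa [mul_assoc] using this

/-- Logarithmic coordinates of a point. -/
noncomputable def LL (p : ℂ × ℂ) : ℝ × (ℝ × ℝ) :=
  (-Real.log ‖p.1‖, (p.1.arg, p.2.arg))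

theorem EE_LL {p : ℂ × ℂ} (hp1 : p.1 ≠ 0) (hp2 : ‖p.2‖ = 1) : EE (LL p) = p := by
  unfold EE LL
  refine Prod.ext ?_ ?_
  · simp only [Complex.ofReal_neg, neg_neg]
    rw [Complex.exp_add, ← Complex.ofReal_exp, Real.exp_log (norm_pos_iff.2 hp1)]
    exact Complex.norm_mul_exp_arg_mul_I p.1
  · have := Complex.norm_mul_exp_arg_mul_I p.2
    rw [hp2] at this
    simpa using this

theorem LL_nonneg {p : ℂ × ℂ} (hp : p ∈ MM) : 0 ≤ (LL p).1 := by
  have := mem_closedBall_zero_iff.1 hp.1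
  simp only [LL, Left.nonneg_neg_iff]
  exact Real.log_nonpos (norm_nonneg _) this

theorem fderivWithin_inr_zero {u : ℝ × (ℝ × ℝ) → ℝ × (ℝ × ℝ)} {s1 : ℝ} (hs1 : 0 < s1)
    (h0 : ∀ a, u (0, a) = 0) (x v : ℝ × ℝ) {D : ℝ × (ℝ × ℝ) →L[ℝ] ℝ × (ℝ × ℝ)}
    (hd : HasFDerivWithinAt u D (Icc 0 s1 ×ˢ univ) (0, x)) : D (0, v) = 0 := by
  have e1 : HasFDerivAt (fun y : ℝ × ℝ => ((0:ℝ), y)) (ContinuousLinearMap.inr ℝ ℝ (ℝ × ℝ)) x :=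
    hasFDerivAt_prodMk_right 0 x
  have e2 : HasFDerivAt (fun y : ℝ × ℝ => u ((0:ℝ), y))
      (D.comp (ContinuousLinearMap.inr ℝ ℝ (ℝ × ℝ))) x := by
    rw [← hasFDerivWithinAt_univ] at e1 ⊢
    exact hd.comp x e1 (fun y _ => ⟨⟨le_rfl, hs1.le⟩, mem_univ _⟩)
  have e3 : (fun y : ℝ × ℝ => u ((0:ℝ), y)) = fun _ => 0 := funext h0
  rw [e3] at e2
  have := e2.unique (hasFDerivAt_const _ _)
  simpa using DFunLike.congr_fun this v

theorem radial_pos {u : ℝ × (ℝ × ℝ) → ℝ × (ℝ × ℝ)} {s1 : ℝ} (hs1 : 0 < s1)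
    (hu : ContDiffOn ℝ (⊤ : ℕ∞) u (Icc 0 s1 ×ˢ univ))
    (h0 : ∀ a, u (0, a) = 0)
    (hnn : ∀ x, 0 ≤ x.1 → x.1 ≤ s1 → 0 ≤ (x + u x).1)
    {W : ℝ × (ℝ × ℝ) → ℂ × ℂ} (hW : ContDiffOn ℝ (⊤ : ℕ∞) W (Ici 0 ×ˢ univ))
    (hWu : ∀ x, 0 ≤ x.1 → x.1 ≤ s1 → W (x + u x) = EE (TT x)) (a : ℝ × ℝ) :
    -1 < (fderivWithin ℝ u (Icc 0 s1 ×ˢ univ) (0, a) (1, 0)).1 := by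
  set D := fderivWithin ℝ u (Icc 0 s1 ×ˢ univ) (0, a) with hD
  have hd : HasFDerivWithinAt u D (Icc 0 s1 ×ˢ univ) (0, a) :=
    ((hu (0, a) ⟨⟨le_rfl, hs1.le⟩, mem_univ _⟩).differentiableWithinAt (by simp)).hasFDerivWithinAt
  set w := D (1, 0) with hw
  -- curves
  have hcurve : ∀ b : ℝ × ℝ, HasDerivWithinAt
      (fun τ : ℝ => (τ, a + τ • b) + u (τ, a + τ • b)) ((1, b) + w) (Icc 0 s1) 0 := by
    intro b
    have e1 : HasDerivWithinAt (fun τ : ℝ => (τ, a + τ • b)) (1, b) (Icc 0 s1) 0 := by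
      refine (hasDerivWithinAt_id (0:ℝ) _).prodMk ?_
      simpa using ((hasDerivWithinAt_id (0:ℝ) (Icc 0 s1)).smul_const b).const_add a
    have e0 : MapsTo (fun τ : ℝ => (τ, a + τ • b)) (Icc 0 s1) (Icc 0 s1 ×ˢ univ) :=
      fun y hy => ⟨hy, mem_univ _⟩
    have hd' : HasFDerivWithinAt u D (Icc 0 s1 ×ˢ univ) ((fun τ : ℝ => (τ, a + τ • b)) 0) := by
      simpa using hd
    have e2 := hd'.comp_hasDerivWithinAt 0 e1 e0
    have e3 : D (1, b) = w := by
      have : ((1:ℝ), b) = (1, 0) + (0, b) := by simp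
      rw [this, map_add, fderivWithin_inr_zero hs1 h0 a b hd, add_zero]
    rw [e3] at e2
    exact e1.add e2
  have hge : 0 ≤ 1 + w.1 := by
    have e1 := (hcurve 0).mono (Ioc_subset_Icc_self)
    have e2 : HasDerivWithinAt (fun τ : ℝ => ((τ, a + τ • (0 : ℝ × ℝ)) + u (τ, a + τ • 0)).1)
        (1 + w.1) (Ioc 0 s1) 0 := by
      have := (ContinuousLinearMap.fst ℝ ℝ (ℝ × ℝ)).hasFDerivAt.comp_hasDerivWithinAt 0 e1
      exact this
    rw [hasDerivWithinAt_iff_tendsto_slope' (by simp)] at e2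
    have : (nhdsWithin (0:ℝ) (Ioc 0 s1)).NeBot := by
      rw [nhdsWithin_Ioc_eq_nhdsGT hs1]; infer_instance
    refine ge_of_tendsto e2 ?_
    filter_upwards [self_mem_nhdsWithin] with τ hτ
    have h1 := hnn (τ, a + τ • (0 : ℝ × ℝ)) hτ.1.le hτ.2
    simp only [slope, vsub_eq_sub, sub_zero, smul_eq_mul, add_zero, h0, smul_zero] at h1 ⊢
    exact mul_nonneg (inv_nonneg.2 hτ.1.le) h1
  by_contra hcon
  have hw1 : w.1 = -1 := by linarith
  have c1 := hcurve (-w.2)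
  have hz : ((1:ℝ), -w.2) + w = 0 := Prod.ext (by simp [hw1]) (by simp)
  rw [hz] at c1
  set ζ := fun τ : ℝ => (τ, a + τ • (-w.2)) + u (τ, a + τ • (-w.2)) with hζ
  have hζ0 : ζ 0 = (0, a) := by simp [hζ, h0]
  have hWd : HasFDerivWithinAt W (fderivWithin ℝ W (Ici 0 ×ˢ univ) (0, a)) (Ici 0 ×ˢ univ) (ζ 0) := by
    rw [hζ0]
    exact ((hW (0, a) ⟨self_mem_Ici, mem_univ _⟩).differentiableWithinAt
      (by simp)).hasFDerivWithinAt
  have c2 := hWd.comp_hasDerivWithinAt 0 c1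
    (fun τ hτ => ⟨hnn (τ, a + τ • (-w.2)) hτ.1 hτ.2, mem_univ _⟩)
  rw [map_zero] at c2
  have c3 := (ContinuousLinearMap.fst ℝ ℂ ℂ).hasFDerivAt.comp_hasDerivWithinAt 0 c2
  rw [map_zero] at c3
  have c4 : HasDerivWithinAt (fun τ : ℝ => Complex.exp (-(τ : ℂ) +
      ((a.1 + τ * (-w.2.1) : ℝ) : ℂ) * Complex.I)) 0 (Icc 0 s1) 0 := by
    refine c3.congr_of_mem (fun τ hτ => ?_) ⟨le_rfl, hs1.le⟩
    have := congrArg Prod.fst (hWu (τ, a + τ • (-w.2)) hτ.1 hτ.2)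
    simp only [EE, TT, Prod.fst_add, Prod.smul_fst, Prod.fst_neg, smul_eq_mul] at this
    exact this.symm
  have d1 : HasDerivAt (fun τ : ℝ => ((τ : ℝ) : ℂ)) 1 0 := Complex.ofRealCLM.hasDerivAt
  have d2 : HasDerivAt (fun τ : ℝ => (-(τ : ℂ) +
      ((a.1 + τ * (-w.2.1) : ℝ) : ℂ) * Complex.I)) (-1 + (-w.2.1 : ℂ) * Complex.I) 0 := by
    have e : (fun τ : ℝ => (-(τ : ℂ) + ((a.1 + τ * (-w.2.1) : ℝ) : ℂ) * Complex.I)) =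
        fun τ : ℝ => -(τ : ℂ) + ((a.1 : ℂ) + (τ : ℂ) * (-w.2.1 : ℂ)) * Complex.I := by
      funext τ; push_cast; ring
    rw [e]
    have := d1.neg.add (((d1.mul_const (-w.2.1 : ℂ)).const_add (a.1 : ℂ)).mul_const Complex.I)
    exact this.congr_deriv (by ring)
  have d3 := d2.cexp.hasDerivWithinAt (s := Icc 0 s1)
  have huniq := (uniqueDiffOn_Icc hs1 0 ⟨le_rfl, hs1.le⟩).eq_deriv _ c4 d3
  have hne := mul_eq_zero.1 huniq.symm
  rcases hne with h | h
  · exact Complex.exp_ne_zero _ h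
  · have := congrArg Complex.re h
    simp at this

theorem TT_period (m n : ℤ) (s : ℝ) (a : ℝ × ℝ) :
    TT (s, a + ((m : ℝ) * (2 * Real.pi), (n : ℝ) * (2 * Real.pi))) =
      ((TT (s, a)).1, (TT (s, a)).2 + ((m : ℝ) * (2 * Real.pi), (n : ℝ) * (2 * Real.pi))) := by
  simp only [TT, Prod.fst_add, Prod.snd_add, Prod.mk_add_mk]
  refine Prod.ext rfl (Prod.ext rfl ?_)
  simp only
  ring

theorem clog_contDiffAt {z : ℂ} (h : z ∈ Complex.slitPlane) :
    ContDiffAt ℝ (⊤ : ℕ∞) Complex.log z := (Complex.contDiffAt_log h).restrict_scalars ℝ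

theorem re_contDiff : ContDiff ℝ (⊤ : ℕ∞) Complex.re := Complex.reCLM.contDiff

theorem im_contDiff : ContDiff ℝ (⊤ : ℕ∞) Complex.im := Complex.imCLM.contDiff

theorem lift_exists {f : ℂ × ℂ → ℂ × ℂ} (hf : ContDiffOn ℝ (⊤ : ℕ∞) f MM) (hm : MapsTo f MM MM)
    (hbd : ∀ p ∈ (sphere (0:ℂ) 1) ×ˢ (sphere (0:ℂ) 1), f p = p) :
    ∃ (u : ℝ × (ℝ × ℝ) → ℝ × (ℝ × ℝ)) (s1 : ℝ), 0 < s1 ∧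
      ContDiffOn ℝ (⊤ : ℕ∞) u (Icc 0 s1 ×ˢ univ) ∧ (∀ a, u (0, a) = 0) ∧
      (∀ (m n : ℤ) s a,
        u (s, a + ((m : ℝ) * (2 * Real.pi), (n : ℝ) * (2 * Real.pi))) = u (s, a)) ∧
      ∀ x, 0 ≤ x.1 → x.1 ≤ s1 → f (EE (TT x)) = EE (x + u x) := by
  set P : ℝ × (ℝ × ℝ) → ℂ × ℂ := fun x => f (EE (TT x)) with hP
  have hTm : ∀ x : ℝ × (ℝ × ℝ), 0 ≤ x.1 → EE (TT x) ∈ MM := fun x hx => EE_mem hx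
  have hPs : ContDiffOn ℝ (⊤ : ℕ∞) P (Ici 0 ×ˢ univ) :=
    hf.comp (EE_contDiff.comp TT_contDiff).contDiffOn (fun x hx => hTm x hx.1)
  set Q : ℝ × (ℝ × ℝ) → ℂ × ℂ := fun x => ((P x).1 / (EE x).1, (P x).2 / (EE x).2) with hQ
  have hE1 : ∀ x, (EE x).1 ≠ 0 := fun x => Complex.exp_ne_zero _
  have hE2 : ∀ x, (EE x).2 ≠ 0 := fun x => Complex.exp_ne_zero _
  have hQs : ContDiffOn ℝ (⊤ : ℕ∞) Q (Ici 0 ×ˢ univ) := by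
    have i1 : ContDiff ℝ (⊤ : ℕ∞) (fun x => (EE x).1⁻¹) :=
      (contDiff_fst.comp EE_contDiff).inv hE1
    have i2 : ContDiff ℝ (⊤ : ℕ∞) (fun x => (EE x).2⁻¹) :=
      (contDiff_snd.comp EE_contDiff).inv hE2
    have j1 : ContDiffOn ℝ (⊤ : ℕ∞) (fun x => (P x).1) (Ici 0 ×ˢ univ) :=
      contDiff_fst.comp_contDiffOn hPs
    have j2 : ContDiffOn ℝ (⊤ : ℕ∞) (fun x => (P x).2) (Ici 0 ×ˢ univ) :=
      contDiff_snd.comp_contDiffOn hPs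
    simp only [hQ, div_eq_mul_inv]
    exact (j1.mul i1.contDiffOn).prodMk (j2.mul i2.contDiffOn)
  have hQ0 : ∀ a, Q (0, a) = (1, 1) := by
    intro a
    have e1 : TT (0, a) = (0, a) := by simp [TT]
    have e2 : P (0, a) = EE (0, a) := by
      simp only [hP, e1]
      exact hbd _ (EE_mem_bd a)
    simp only [hQ, e2]
    rw [div_self (hE1 _), div_self (hE2 _)]
  have hPper : ∀ (m n : ℤ) s a,
      P (s, a + ((m : ℝ) * (2 * Real.pi), (n : ℝ) * (2 * Real.pi))) = P (s, a) := by
    intro m n s a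
    simp only [hP, TT_period, EE_period]
  have hQper : ∀ (m n : ℤ) s a,
      Q (s, a + ((m : ℝ) * (2 * Real.pi), (n : ℝ) * (2 * Real.pi))) = Q (s, a) := by
    intro m n s a
    simp only [hQ, hPper, EE_period]
  obtain ⟨s1, hs1, hs1Q⟩ : ∃ s1, 0 < s1 ∧ ∀ s a, 0 ≤ s → s ≤ s1 → dist (Q (s, a)) (1, 1) < 1 := by
    have hcpt : IsCompact (Icc (0:ℝ) 1 ×ˢ closedBall (0 : ℝ × ℝ) 7) :=
      isCompact_Icc.prod (isCompact_closedBall _ _)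
    have huc := hcpt.uniformContinuousOn_of_continuous
      (hQs.continuousOn.mono (fun x hx => ⟨hx.1.1, mem_univ _⟩))
    rw [Metric.uniformContinuousOn_iff] at huc
    obtain ⟨δ, hδ, h⟩ := huc 1 one_pos
    refine ⟨min 1 (δ / 2), by positivity, fun s a hs hs' => ?_⟩
    obtain ⟨m, n, hmn⟩ := exists_translate a
    rw [← hQper m n s a]
    set b := a + ((m : ℝ) * (2 * Real.pi), (n : ℝ) * (2 * Real.pi))
    rw [← hQ0 b]
    refine h (s, b) ⟨⟨hs, hs'.trans (min_le_left _ _)⟩, hmn⟩ (0, b) ⟨⟨le_rfl, zero_le_one⟩, hmn⟩ ?_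
    rw [Prod.dist_eq]
    simp only [dist_self, Real.dist_eq, sub_zero, abs_of_nonneg hs]
    rw [max_eq_left hs]
    linarith [min_le_right 1 (δ / 2)]
  have hslit : ∀ z : ℂ, dist z 1 < 1 → z ∈ Complex.slitPlane := by
    intro z hz
    rw [dist_eq_norm] at hz
    have := Complex.mem_slitPlane_of_norm_lt_one hz
    simpa using this
  have hs1 : 0 < s1 := hs1
  have hsl1 : ∀ x : ℝ × (ℝ × ℝ), 0 ≤ x.1 → x.1 ≤ s1 → (Q x).1 ∈ Complex.slitPlane :=
    fun x hx hx' => hslit _ ((le_max_left _ _).trans_lt (hs1Q x.1 x.2 hx hx'))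
  have hsl2 : ∀ x : ℝ × (ℝ × ℝ), 0 ≤ x.1 → x.1 ≤ s1 → (Q x).2 ∈ Complex.slitPlane :=
    fun x hx hx' => hslit _ ((le_max_right _ _).trans_lt (hs1Q x.1 x.2 hx hx'))
  refine ⟨fun x => (-(Complex.log (Q x).1).re, ((Complex.log (Q x).1).im,
    (Complex.log (Q x).2).im)), s1, hs1, ?_, ?_, ?_, ?_⟩
  · have hQs' : ContDiffOn ℝ (⊤ : ℕ∞) Q (Icc 0 s1 ×ˢ univ) :=
      hQs.mono (fun x hx => ⟨hx.1.1, mem_univ _⟩)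
    have l1 : ContDiffOn ℝ (⊤ : ℕ∞) (fun x => Complex.log (Q x).1) (Icc 0 s1 ×ˢ univ) :=
      fun x hx => by
        have h1 : ContDiffWithinAt ℝ (⊤ : ℕ∞) (fun x => (Q x).1) (Icc 0 s1 ×ˢ univ) x :=
          (contDiff_fst.comp_contDiffOn hQs') x hx
        have h2 : ContDiffAt ℝ (⊤ : ℕ∞) Complex.log ((fun x => (Q x).1) x) :=
          clog_contDiffAt (hsl1 x hx.1.1 hx.1.2)
        exact h2.comp_contDiffWithinAt x h1
    have l2 : ContDiffOn ℝ (⊤ : ℕ∞) (fun x => Complex.log (Q x).2) (Icc 0 s1 ×ˢ univ) :=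
      fun x hx => by
        have h1 : ContDiffWithinAt ℝ (⊤ : ℕ∞) (fun x => (Q x).2) (Icc 0 s1 ×ˢ univ) x :=
          (contDiff_snd.comp_contDiffOn hQs') x hx
        have h2 : ContDiffAt ℝ (⊤ : ℕ∞) Complex.log ((fun x => (Q x).2) x) :=
          clog_contDiffAt (hsl2 x hx.1.1 hx.1.2)
        exact h2.comp_contDiffWithinAt x h1
    exact (re_contDiff.comp_contDiffOn l1).neg.prodMk
      ((im_contDiff.comp_contDiffOn l1).prodMk (im_contDiff.comp_contDiffOn l2))
  · intro a
    simp [hQ0 a]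
  · intro m n s a
    simp only [hQper]
  · intro x hx hx'
    rw [EE_add]
    have hPm : P x ∈ MM := hm (hTm x hx)
    refine Prod.ext ?_ ?_
    · simp only
      have e : -((-(Complex.log (Q x).1).re : ℝ) : ℂ) + ((Complex.log (Q x).1).im : ℂ) * Complex.I =
          Complex.log (Q x).1 := by
        push_cast; rw [neg_neg]; exact Complex.re_add_im _
      rw [e, Complex.exp_log (Complex.slitPlane_ne_zero (hsl1 x hx hx'))]
      simp only [hQ]
      rw [mul_div_cancel₀ _ (hE1 x)]
    · simp only
      have hn : ‖(Q x).2‖ = 1 := by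
        simp only [hQ]
        rw [norm_div, norm_EE_snd, mem_sphere_zero_iff_norm.1 hPm.2, div_one]
      have e : ((Complex.log (Q x).2).im : ℂ) * Complex.I = Complex.log (Q x).2 := by
        conv_rhs => rw [← Complex.re_add_im (Complex.log (Q x).2)]
        rw [Complex.log_re, hn]; simp
      rw [e, Complex.exp_log (Complex.slitPlane_ne_zero (hsl2 x hx hx'))]
      simp only [hQ]
      rw [mul_div_cancel₀ _ (hE2 x)]

/-- Descend an equivariant family on the half space to the solid torus. -/
noncomputable def descend (k : (ℝ × (ℝ × ℝ)) × ℝ → ℝ × (ℝ × ℝ)) (y : (ℂ × ℂ) × ℝ) : ℂ × ℂ :=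
  open Classical in if y.1.1 = 0 then y.1 else EE (k (LL y.1, y.2))

/-- Equivariance under the period lattice on the half space. -/
def Equivar (k : (ℝ × (ℝ × ℝ)) × ℝ → ℝ × (ℝ × ℝ)) : Prop :=
  ∀ (m n : ℤ) (x : ℝ × (ℝ × ℝ)) (t : ℝ), 0 ≤ x.1 →
    k (x + (0, ((m : ℝ) * (2 * Real.pi), (n : ℝ) * (2 * Real.pi))), t) =
      k (x, t) + (0, ((m : ℝ) * (2 * Real.pi), (n : ℝ) * (2 * Real.pi)))

theorem descend_EE {k : (ℝ × (ℝ × ℝ)) × ℝ → ℝ × (ℝ × ℝ)} (hk : Equivar k)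
    {x : ℝ × (ℝ × ℝ)} (hx : 0 ≤ x.1) (t : ℝ) : descend k (EE x, t) = EE (k (x, t)) := by
  have h1 : (EE x).1 ≠ 0 := Complex.exp_ne_zero _
  simp only [descend, h1, if_false]
  obtain ⟨m, n, h⟩ := EE_inj (EE_LL h1 (norm_EE_snd x))
  have h' : LL (EE x) = x + (0, ((m : ℝ) * (2 * Real.pi), (n : ℝ) * (2 * Real.pi))) := by
    rw [h]; refine Prod.ext (by simp) (by simp)
  rw [h', hk m n x t hx]
  have := EE_period m n (k (x, t)).1 (k (x, t)).2
  refine Eq.trans ?_ this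
  congr 1
  refine Prod.ext (by simp) (by simp)

theorem descend_smooth {k : (ℝ × (ℝ × ℝ)) × ℝ → ℝ × (ℝ × ℝ)} (hk : Equivar k)
    (hks : ContDiffOn ℝ (⊤ : ℕ∞) k (HR (ℝ × ℝ))) {s2 : ℝ}
    (hid : ∀ x t, 0 ≤ x.1 → s2 ≤ x.1 → k (x, t) = x) (J : Set ℝ) :
    ContDiffOn ℝ (⊤ : ℕ∞) (descend k) (MM ×ˢ J) := by
  rintro ⟨p, t⟩ ⟨hp, ht⟩
  simp only at hp ht
  have hp2 : ‖p.2‖ = 1 := mem_sphere_zero_iff_norm.1 hp.2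
  by_cases h0 : p.1 = 0
  · have hev : descend k =ᶠ[nhdsWithin (p, t) (MM ×ˢ J)] fun y => y.1 := by
      have hop : {y : (ℂ × ℂ) × ℝ | ‖y.1.1‖ < Real.exp (-s2)} ∈ nhds (p, t) := by
        refine IsOpen.mem_nhds (isOpen_lt (by fun_prop) continuous_const) ?_
        simp [h0, Real.exp_pos]
      filter_upwards [self_mem_nhdsWithin, nhdsWithin_le_nhds hop] with y hy hy'
      by_cases hz : y.1.1 = 0
      · simp [descend, hz]
      · simp only [descend, hz, if_false]
        have hl : s2 ≤ (LL y.1).1 := by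
          have := Real.log_lt_log (norm_pos_iff.2 hz) hy'
          rw [Real.log_exp] at this
          simp only [LL]; linarith
        rw [hid _ _ (LL_nonneg hy.1) hl]
        exact EE_LL hz (mem_sphere_zero_iff_norm.1 hy.1.2)
    refine contDiff_fst.contDiffWithinAt.congr_of_eventuallyEq hev ?_
    simp [descend, h0]
  · -- local logarithm
    have hp2' : p.2 ≠ 0 := by
      intro h; rw [h] at hp2; simp at hp2
    set Λ : (ℂ × ℂ) × ℝ → (ℝ × (ℝ × ℝ)) × ℝ := fun y =>
      ((-(Complex.log (y.1.1 / p.1)).re + (LL p).1, ((Complex.log (y.1.1 / p.1)).im + (LL p).2.1,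
        (Complex.log (y.1.2 / p.2)).im + (LL p).2.2)), y.2) with hΛ
    have hf1 : ContDiff ℝ (⊤ : ℕ∞) (fun y : (ℂ × ℂ) × ℝ => y.1.1 / p.1) :=
      (contDiff_fst.comp contDiff_fst).div_const _
    have hf2 : ContDiff ℝ (⊤ : ℕ∞) (fun y : (ℂ × ℂ) × ℝ => y.1.2 / p.2) :=
      (contDiff_snd.comp contDiff_fst).div_const _
    have l1 : ContDiffAt ℝ (⊤ : ℕ∞) (fun y : (ℂ × ℂ) × ℝ => Complex.log (y.1.1 / p.1)) (p, t) :=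
      ContDiffAt.comp (p, t) (clog_contDiffAt (by simp [div_self h0])) hf1.contDiffAt
    have l2 : ContDiffAt ℝ (⊤ : ℕ∞) (fun y : (ℂ × ℂ) × ℝ => Complex.log (y.1.2 / p.2)) (p, t) :=
      ContDiffAt.comp (p, t) (clog_contDiffAt (by simp [div_self hp2'])) hf2.contDiffAt
    have hΛs : ContDiffAt ℝ (⊤ : ℕ∞) Λ (p, t) :=
      (((re_contDiff.contDiffAt.comp (p, t) l1).neg.add contDiffAt_const).prodMk
        (((im_contDiff.contDiffAt.comp (p, t) l1).add contDiffAt_const).prodMk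
          ((im_contDiff.contDiffAt.comp (p, t) l2).add contDiffAt_const))).prodMk contDiffAt_snd
    set U : Set ((ℂ × ℂ) × ℝ) := {y | y.1.1 ≠ 0} with hU
    have hUn : U ∈ nhds (p, t) :=
      (isOpen_ne_fun (by fun_prop) continuous_const).mem_nhds h0
    have hEΛ : ∀ y ∈ (MM ×ˢ J) ∩ U, EE (Λ y).1 = y.1 ∧ (Λ y).2 = y.2 ∧ 0 ≤ (Λ y).1.1 := by
      rintro y ⟨⟨hy, -⟩, hyU⟩
      have hy2 : ‖y.1.2‖ = 1 := mem_sphere_zero_iff_norm.1 hy.2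
      have hy2' : y.1.2 ≠ 0 := by
        intro h; rw [h] at hy2; simp at hy2
      have hE : EE (Λ y).1 = y.1 := by
        have e : (Λ y).1 = LL p + (-(Complex.log (y.1.1 / p.1)).re,
            ((Complex.log (y.1.1 / p.1)).im, (Complex.log (y.1.2 / p.2)).im)) := by
          simp only [hΛ]
          refine Prod.ext (add_comm _ _) (Prod.ext (add_comm _ _) (add_comm _ _))
        rw [e, EE_add, EE_LL h0 hp2]
        refine Prod.ext ?_ ?_
        · simp only
          have e : -((-(Complex.log (y.1.1 / p.1)).re : ℝ) : ℂ) +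
              ((Complex.log (y.1.1 / p.1)).im : ℂ) * Complex.I = Complex.log (y.1.1 / p.1) := by
            push_cast; rw [neg_neg]; exact Complex.re_add_im _
          rw [e, Complex.exp_log (div_ne_zero hyU h0), mul_div_cancel₀ _ h0]
        · simp only
          have e : ((Complex.log (y.1.2 / p.2)).im : ℂ) * Complex.I = Complex.log (y.1.2 / p.2) := by
            conv_rhs => rw [← Complex.re_add_im (Complex.log (y.1.2 / p.2))]
            rw [Complex.log_re, norm_div, hy2, hp2]; simp
          rw [e, Complex.exp_log (div_ne_zero hy2' hp2'), mul_div_cancel₀ _ hp2']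
      refine ⟨hE, rfl, ?_⟩
      have h1 := norm_EE_fst (Λ y).1
      rw [hE] at h1
      have h2 := mem_closedBall_zero_iff.1 hy.1
      rw [h1, Real.exp_le_one_iff] at h2
      linarith
    have hmem : (p, t) ∈ (MM ×ˢ J) ∩ U := ⟨⟨hp, ht⟩, h0⟩
    have hcomp : ContDiffWithinAt ℝ (⊤ : ℕ∞) (fun y => EE (k (Λ y))) ((MM ×ˢ J) ∩ U) (p, t) := by
      refine EE_contDiff.contDiffAt.comp_contDiffWithinAt (p, t) ?_
      refine ContDiffWithinAt.comp (p, t) (t := HR (ℝ × ℝ)) ?_ hΛs.contDiffWithinAt ?_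
      · exact hks _ (mem_HR.2 (hEΛ _ hmem).2.2)
      · intro y hy
        exact mem_HR.2 (hEΛ y hy).2.2
    have heq : ∀ y ∈ (MM ×ˢ J) ∩ U, descend k y = EE (k (Λ y)) := by
      intro y hy
      obtain ⟨e1, e2, e3⟩ := hEΛ y hy
      have := descend_EE hk e3 (Λ y).2
      rw [e1, e2] at this
      rw [show y = (y.1, y.2) from rfl, this]
    have h3 := hcomp.congr heq (heq _ hmem)
    exact h3.mono_of_mem_nhdsWithin (Filter.inter_mem self_mem_nhdsWithin (nhdsWithin_le_nhds hUn))

theorem descend_maps {k : (ℝ × (ℝ × ℝ)) × ℝ → ℝ × (ℝ × ℝ)}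
    (hkH : ∀ x t, 0 ≤ x.1 → 0 ≤ (k (x, t)).1) {p : ℂ × ℂ} (hp : p ∈ MM) (t : ℝ) :
    descend k (p, t) ∈ MM := by
  by_cases h0 : p.1 = 0
  · simpa [descend, h0] using hp
  · simp only [descend, h0, if_false]
    exact EE_mem (hkH _ _ (LL_nonneg hp))

theorem descend_comp {k g : (ℝ × (ℝ × ℝ)) × ℝ → ℝ × (ℝ × ℝ)} (hk : Equivar k) (hg : Equivar g)
    (hgH : ∀ x t, 0 ≤ x.1 → 0 ≤ (g (x, t)).1)
    (hkg : ∀ x t, 0 ≤ x.1 → k (g (x, t), t) = x) {p : ℂ × ℂ} (hp : p ∈ MM) (t : ℝ) :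
    descend k (descend g (p, t), t) = p := by
  by_cases h0 : p.1 = 0
  · simp [descend, h0]
  · have hL := LL_nonneg hp
    have hE := EE_LL h0 (mem_sphere_zero_iff_norm.1 hp.2)
    have e1 := descend_EE hg hL t
    rw [hE] at e1
    rw [e1, descend_EE hk (hgH _ _ hL), hkg _ _ hL, hE]


/-- First step for the solid torus `M = D² × S¹ ⊆ ℂ × ℂ`: if `f` is a
self-diffeomorphism of `M` with `f = id` on `∂M = S¹ × S¹`, then there are
`r₀ ∈ (0,1)` and a smooth ambient isotopy `G` of `M` rel `∂M` (with smooth inverse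
family `G'`) such that for all `z₁, z₂ ∈ S¹` and `r ∈ [0, r₀]`,
`(G₁ ∘ f)((1−r)z₁, z₂) = ((1−r)z₁, e^{ir}·z₂)`. -/
theorem stmt_19 (f f' : ℂ × ℂ → ℂ × ℂ)
    (hfsm : ContDiffOn ℝ (⊤ : ℕ∞) f ((closedBall (0:ℂ) 1) ×ˢ (sphere (0:ℂ) 1)))
    (hf'sm : ContDiffOn ℝ (⊤ : ℕ∞) f' ((closedBall (0:ℂ) 1) ×ˢ (sphere (0:ℂ) 1)))
    (hbij : Set.BijOn f ((closedBall (0:ℂ) 1) ×ˢ (sphere (0:ℂ) 1))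
      ((closedBall (0:ℂ) 1) ×ˢ (sphere (0:ℂ) 1)))
    (hinv : ∀ p ∈ (closedBall (0:ℂ) 1) ×ˢ (sphere (0:ℂ) 1), f' (f p) = p)
    (hbd : ∀ p ∈ (sphere (0:ℂ) 1) ×ˢ (sphere (0:ℂ) 1), f p = p) :
    ∃ r₀ ∈ Set.Ioo (0:ℝ) 1, ∃ G G' : (ℂ × ℂ) × ℝ → ℂ × ℂ,
      ContDiffOn ℝ (⊤ : ℕ∞) G (((closedBall (0:ℂ) 1) ×ˢ (sphere (0:ℂ) 1)) ×ˢ Set.Icc (0:ℝ) 1) ∧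
      ContDiffOn ℝ (⊤ : ℕ∞) G' (((closedBall (0:ℂ) 1) ×ˢ (sphere (0:ℂ) 1)) ×ˢ Set.Icc (0:ℝ) 1) ∧
      (∀ p ∈ (closedBall (0:ℂ) 1) ×ˢ (sphere (0:ℂ) 1), G (p, 0) = p) ∧
      -- each Gₜ is a diffeomorphism of M with inverse G'ₜ
      (∀ t ∈ Set.Icc (0:ℝ) 1,
        Set.MapsTo (fun p => G (p, t)) ((closedBall (0:ℂ) 1) ×ˢ (sphere (0:ℂ) 1))
          ((closedBall (0:ℂ) 1) ×ˢ (sphere (0:ℂ) 1)) ∧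
        Set.MapsTo (fun p => G' (p, t)) ((closedBall (0:ℂ) 1) ×ˢ (sphere (0:ℂ) 1))
          ((closedBall (0:ℂ) 1) ×ˢ (sphere (0:ℂ) 1)) ∧
        ∀ p ∈ (closedBall (0:ℂ) 1) ×ˢ (sphere (0:ℂ) 1),
          G' (G (p, t), t) = p ∧ G (G' (p, t), t) = p) ∧
      -- G is rel ∂M
      (∀ p ∈ (sphere (0:ℂ) 1) ×ˢ (sphere (0:ℂ) 1), ∀ t ∈ Set.Icc (0:ℝ) 1,
        G (p, t) = p) ∧
      -- the collar normalization property of G₁ ∘ f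
      (∀ z₁ ∈ sphere (0:ℂ) 1, ∀ z₂ ∈ sphere (0:ℂ) 1, ∀ r ∈ Set.Icc (0:ℝ) r₀,
        G (f (((1 - r : ℝ) : ℂ) * z₁, z₂), 1) =
          (((1 - r : ℝ) : ℂ) * z₁, Complex.exp (r * Complex.I) * z₂)) := by
  have hm : MapsTo f MM MM := hbij.mapsTo
  obtain ⟨u, s1, hs1, hus, hu0, huper, hfu⟩ := lift_exists hfsm hm hbd
  have hnn : ∀ x, 0 ≤ x.1 → x.1 ≤ s1 → 0 ≤ (x + u x).1 := by
    intro x hx hx'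
    have h1 : f (EE (TT x)) ∈ MM := hm (EE_mem (x := TT x) hx)
    rw [hfu x hx hx'] at h1
    have h2 := mem_closedBall_zero_iff.1 h1.1
    rw [norm_EE_fst, Real.exp_le_one_iff] at h2
    linarith
  have hpos := radial_pos hs1 hus hu0 hnn (W := fun x => f' (EE x))
    (hf'sm.comp EE_contDiff.contDiffOn (fun x hx => EE_mem hx.1))
    (fun x hx hx' => by
      rw [← hfu x hx hx']
      exact hinv _ (EE_mem (x := TT x) hx))
  obtain ⟨s1', c, C, hs1', hs11, hc, hc1, hC, b1, b2, b3⟩ := collar_bounds hs1 hus hu0 huper hpos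
  obtain ⟨s0, s2, hs0, hs01, k, g, hks, hgs, hkH, hgH, hkg, hgk, hk0, hkb, hkid, hk1, hkeq⟩ :=
    core_isotopy hs1' hc hc1 hC (hus.mono (fun x hx => ⟨⟨hx.1.1, hx.1.2.trans hs11⟩, mem_univ _⟩))
      hu0 b1 b2 b3
  have hkE : Equivar k := by
    intro m n x t _
    refine hkeq _ rfl (fun y => ?_) x t
    have := huper m n y.1 y.2
    refine Eq.trans ?_ this
    congr 1
    refine Prod.ext (by simp) (by simp)
  have hgE : Equivar g := by
    intro m n x t hx
    have h1 := hkE m n (g (x, t)) t (hgH x t hx)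
    rw [hkg x t hx] at h1
    rw [← h1]
    exact hgk _ t (by simpa using hgH x t hx)
  have hgid : ∀ x t, 0 ≤ x.1 → s2 ≤ x.1 → g (x, t) = x := by
    intro x t hx hx'
    have := hgk x t hx
    rwa [hkid x t hx'] at this
  have hg0 : ∀ x, 0 ≤ x.1 → g (x, 0) = x := by
    intro x hx
    have := hgk x 0 hx
    rwa [hk0 x] at this
  refine ⟨1 - Real.exp (-s0), ⟨?_, ?_⟩, descend g, descend k, descend_smooth hgE hgs hgid _,
    descend_smooth hkE hks (fun x t _ h => hkid x t h) _, ?_, ?_, ?_, ?_⟩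
  · have : Real.exp (-s0) < 1 := by
      rw [← Real.exp_zero]
      exact Real.exp_lt_exp.2 (by linarith)
    linarith
  · linarith [Real.exp_pos (-s0)]
  · intro p hp
    by_cases h0 : p.1 = 0
    · simp [descend, h0]
    · simp only [descend, h0, if_false]
      rw [hg0 _ (LL_nonneg hp)]
      exact EE_LL h0 (mem_sphere_zero_iff_norm.1 hp.2)
  · intro t _
    exact ⟨fun p hp => descend_maps hgH hp t, fun p hp => descend_maps hkH hp t,
      fun p hp => ⟨descend_comp hkE hgE hgH hkg hp t, descend_comp hgE hkE hkH hgk hp t⟩⟩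
  · intro p hp t _
    have hn1 : ‖p.1‖ = 1 := mem_sphere_zero_iff_norm.1 hp.1
    have hn2 : ‖p.2‖ = 1 := mem_sphere_zero_iff_norm.1 hp.2
    have h0 : p.1 ≠ 0 := by
      intro h; rw [h] at hn1; simp at hn1
    simp only [descend, h0, if_false]
    have e1 : LL p = (0, (LL p).2) := Prod.ext (by simp [LL, hn1]) rfl
    have e2 : g ((0, (LL p).2), t) = (0, (LL p).2) := by
      have := hgk (0, (LL p).2) t le_rfl
      rwa [hkb] at this
    rw [e1, e2, ← e1]
    exact EE_LL h0 hn2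
  · intro z₁ hz₁ z₂ hz₂ r hr
    have hn1 : ‖z₁‖ = 1 := mem_sphere_zero_iff_norm.1 hz₁
    have hn2 : ‖z₂‖ = 1 := mem_sphere_zero_iff_norm.1 hz₂
    have hr1 : 0 < 1 - r := by linarith [hr.2, Real.exp_pos (-s0)]
    set s := -Real.log (1 - r) with hs
    have hexp : Real.exp (-s) = 1 - r := by rw [hs, neg_neg, Real.exp_log hr1]
    have hs_nn : 0 ≤ s := by
      rw [hs]
      have := Real.log_nonpos hr1.le (by linarith [hr.1])
      linarith
    have hss0 : s ≤ s0 := by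
      have : Real.exp (-s0) ≤ Real.exp (-s) := by rw [hexp]; linarith [hr.2]
      have := Real.exp_le_exp.1 this
      linarith
    set y : ℝ × (ℝ × ℝ) := (s, (z₁.arg, z₂.arg + r)) with hy
    have a1 : Complex.exp (-(s : ℂ) + (z₁.arg : ℂ) * Complex.I) = ((1 - r : ℝ) : ℂ) * z₁ := by
      rw [Complex.exp_add, ← Complex.ofReal_neg, ← Complex.ofReal_exp, hexp]
      congr 1
      have := Complex.norm_mul_exp_arg_mul_I z₁
      rw [hn1] at this
      simpa using this
    have a2 : Complex.exp ((z₂.arg : ℂ) * Complex.I) = z₂ := by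
      have := Complex.norm_mul_exp_arg_mul_I z₂
      rw [hn2] at this
      simpa using this
    have hTy : EE (TT y) = (((1 - r : ℝ) : ℂ) * z₁, z₂) := by
      have : TT y = (s, (z₁.arg, z₂.arg)) := by
        simp only [TT, hy, hexp]
        refine Prod.ext rfl (Prod.ext rfl ?_)
        simp only
        ring
      rw [this]
      exact Prod.ext a1 a2
    have hEy : EE y = (((1 - r : ℝ) : ℂ) * z₁, Complex.exp (r * Complex.I) * z₂) := by
      refine Prod.ext a1 ?_
      simp only [EE, hy]
      rw [Complex.ofReal_add, add_mul, Complex.exp_add, a2, mul_comm]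
    rw [← hTy, hfu y hs_nn (hss0.trans (hs01.trans hs11)), ← hk1 y hs_nn hss0,
      descend_EE hgE (hkH _ _ hs_nn), hgk _ _ hs_nn, hEy]
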